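/- Let f be the elimination scoring rule associated to a monotone scoring system s, defined on profiles of weak orders over all finite candidate sets, and suppose f satisfies independence of clones and respects cohesive majorities. Write α_m = s((1,…,1))₁ for the first score value of the linear order type on m candidates. Then: (1) s((2,1)) = (α₃, 0); (2) s((3,1)) = (α₄, 0); (3) s((2,1,1)) = (α₄, 0, 0); and more generally (4) every dichotomous order type (k, k′) with k + k′ = m has scoring vector s((k,k′)) = (α_m, 0). -/

import Mathlib

/-!
Call a vote scored by approval if it gives `α_k` points to the members of its top class and none to
the others, where `k` is the number of candidates present (a vote with a single class gives none at
all). The theorem says that dichotomous votes and votes of type `(2, 1, 1)` are scored by approval.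

Cohesive majorities are exploited by one kind of profile: a bare majority `L₁` of the voters has `a`
on top and none of them has `c` on top, but a wrong score value makes `a` lowest, and after the
elimination of `a` the candidate `c` has maximal score on every remaining set, hence wins
(`win_elim_dom`). Independence of clones is exploited by profiles in which merging clones would
change the winners.

For linear votes, `α_m > 0` (`Al_pos`) and the second score value is zero (`lin_second`), so linear
votes are scored by approval (`good_linear`). For the types `(m - 1, 1)`, clones give
`s[m-1,1]₁ ≤ α_m` (`allBut_le`) and show that equality holds for one `m ≥ 3` iff it holds for all
(`allBut_iff`). If it failed, then `m = 3` and `m = 4` would force both `s[2,1,1]₁ ≥ α₄`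
(`regime_two`) and `s[2,1,1]₁ < α₄` (`regime_one`), whence `allBut_eq`.

Given a vote that is scored by approval on all proper subsets of the candidates, its first score
value is at least `α_m` by cohesive majorities (`lower_bound`) and, if its top class has two
members, at most `α_m` by clones (`upper_bound`); the type `(1, m - 1)` is bounded from above by
cohesive majorities (`upper_bound_one`). Induction on `m` settles all dichotomous types (`dich_eq`).
As the restrictions of a vote of type `(2, 1, 1)` are dichotomous or linear, the same bounds give
its first score value (`first_211`), and one more profile gives the second (`second_211`).
-/

open Finset

attribute [local instance] Classical.propDecidable

/-- A weak order on a candidate type `C`: a complete and transitive binary relation. -/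
structure WeakOrder (C : Type*) where
  rel : C → C → Prop
  total : ∀ a b, rel a b ∨ rel b a
  trans : ∀ a b c, rel a b → rel b c → rel a c

namespace WeakOrder

variable {C : Type*}

/-- Strict preference. -/
def strict (w : WeakOrder C) (a b : C) : Prop :=
  w.rel a b ∧ ¬ w.rel b a

/-- Indifference. -/
def indiff (w : WeakOrder C) (a b : C) : Prop :=
  w.rel a b ∧ w.rel b a

/-- The set of top-ranked candidates of `w` within the candidate set `A`. -/
noncomputable def topSet (w : WeakOrder C) (A : Finset C) : Finset C :=
  A.filter fun c => ∀ d ∈ A, w.rel c d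

variable [DecidableEq C]

/-- Number of candidates in `A` strictly preferred to `a`. -/
noncomputable def cardAbove (w : WeakOrder C) (A : Finset C) (a : C) : ℕ :=
  (A.filter fun b => w.strict b a).card

/-- The (0-based) index of the indifference class of `a` within `A`
(0 = top indifference class). -/
noncomputable def classIdx (w : WeakOrder C) (A : Finset C) (a : C) : ℕ :=
  ((A.filter fun b => w.strict b a).image (w.cardAbove A)).card

/-- The number of indifference classes of `w` on `A`. -/
noncomputable def numClasses (w : WeakOrder C) (A : Finset C) : ℕ :=
  (A.image (w.cardAbove A)).card

/-- The order type of `w` on `A`: the list of sizes of its indifference classes,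
from the top class downwards. -/
noncomputable def orderType (w : WeakOrder C) (A : Finset C) : List ℕ :=
  (List.range (w.numClasses A)).map fun j => (A.filter fun a => w.classIdx A a = j).card

end WeakOrder

/-- Weak order induced by a rank function (smaller rank = more preferred). -/
def ofRank {C : Type*} (ρ : C → ℕ) : WeakOrder C where
  rel a b := ρ a ≤ ρ b
  total a b := le_total _ _
  trans _ _ _ hab hbc := le_trans hab hbc

section Rules

variable {C N : Type*} [DecidableEq C] [Fintype N]

/-- The score of candidate `a` in profile `P` on remaining candidate set `A`,
under the scoring system `s` (which maps an order type and a 0-based class index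
to a real score). -/
noncomputable def totalScore (s : List ℕ → ℕ → ℝ) (P : N → WeakOrder C)
    (A : Finset C) (a : C) : ℝ :=
  ∑ i : N, s ((P i).orderType A) ((P i).classIdx A a)

/-- The set of lowest-scoring candidates in `A`. -/
noncomputable def lowest (s : List ℕ → ℕ → ℝ) (P : N → WeakOrder C)
    (A : Finset C) : Finset C :=
  A.filter fun c => ∀ d ∈ A, totalScore s P A c ≤ totalScore s P A d

/-- Fuel-based helper for the elimination scoring rule. -/
noncomputable def winnersAux (s : List ℕ → ℕ → ℝ) (P : N → WeakOrder C) :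
    ℕ → Finset C → Finset C
  | 0, A => A
  | n + 1, A =>
    if A.card ≤ 1 then A
    else (lowest s P A).biUnion fun c => winnersAux s P n (A.erase c)

/-- The elimination scoring rule associated with scoring system `s`: repeatedly
eliminate a lowest-scoring candidate (parallel-universe tie-breaking) until one
candidate remains. -/
noncomputable def winners (s : List ℕ → ℕ → ℝ) (P : N → WeakOrder C)
    (A : Finset C) : Finset C :=
  winnersAux s P A.card A

/-- Approval score: the number of voters ranking `c` in their top indifference
class within `A`. -/
noncomputable def approvalScore (P : N → WeakOrder C) (A : Finset C) (c : C) : ℕ :=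
  (Finset.univ.filter fun i => c ∈ (P i).topSet A).card

end Rules

/-- The approval scoring system: `s(τ) = (1,0,…,0)` for every order type `τ`
(with `s(τ) = (0)` when `|τ| = 1`). -/
noncomputable def approvalScoring : List ℕ → ℕ → ℝ :=
  fun τ j => if j = 0 ∧ 2 ≤ τ.length then 1 else 0

/-- The split scoring system: `s(τ) = (1/τ(1),0,…,0)` for every order type `τ`
(with `s(τ) = (0)` when `|τ| = 1`). -/
noncomputable def splitScoring : List ℕ → ℕ → ℝ :=
  fun τ j => if j = 0 ∧ 2 ≤ τ.length then ((τ.headI : ℝ))⁻¹ else 0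

/-- The Borda-style scoring system:
`s(τ) = (m−1, m−1−τ(1), …, m−1−∑_{i<k−1} τ(i))` where `m = τ.sum`. -/
noncomputable def bordaScoring : List ℕ → ℕ → ℝ :=
  fun τ j => ((τ.sum : ℝ) - 1) - (((τ.take j).sum : ℕ) : ℝ)

/-- Nonnegativity of a scoring system. -/
def NonnegSys (s : List ℕ → ℕ → ℝ) : Prop := ∀ τ j, 0 ≤ s τ j

/-- The last score value of every (nonempty) order type is zero. -/
def LastZeroSys (s : List ℕ → ℕ → ℝ) : Prop :=
  ∀ τ : List ℕ, τ ≠ [] → s τ (τ.length - 1) = 0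

/-- Monotonicity of a scoring system: earlier indifference classes get weakly
higher scores. -/
def MonotoneSys (s : List ℕ → ℕ → ℝ) : Prop :=
  ∀ τ i j, i ≤ j → s τ j ≤ s τ i

section CloneHoverEtc

variable {C N : Type*}

/-- `X` is a clone set in the profile `P` relative to ambient candidate set `A`. -/
def IsCloneSet (P : N → WeakOrder C) (A X : Finset C) : Prop :=
  X ⊆ A ∧ ∀ i : N, ∀ c ∈ A, c ∉ X →
    (∀ x ∈ X, (P i).strict x c) ∨ (∀ x ∈ X, (P i).indiff x c) ∨
      (∀ x ∈ X, (P i).strict c x)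

/-- `w2` is obtained from `w` by a `c`-hover: `c` is alone in its (non-top)
indifference class in `w`, and in `w2` it is merged into the indifference class
directly above it, everything else being unchanged. -/
def IsCHover (w w2 : WeakOrder C) (c : C) : Prop :=
  (∀ x, x ≠ c → ¬ w.indiff c x) ∧
  (∃ b, w.strict b c) ∧
  (∀ a b, a ≠ c → (w2.rel a b ↔ w.rel a b)) ∧
  (∀ b, w2.rel c b ↔ (w.rel c b ∨ ((w.strict b c) ∧ ∀ y, w.strict y c → w.rel b y)))

/-- The sincere coarsening of `w` merging all candidates strictly preferred to
`b` into a single top indifference class, leaving the rest unchanged. -/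
def mergeAbove (w : WeakOrder C) (b : C) : WeakOrder C where
  rel u v := w.strict u b ∨ (¬ w.strict v b ∧ w.rel u v)
  total u v := by
    by_cases hu : w.strict u b
    · exact Or.inl (Or.inl hu)
    · by_cases hv : w.strict v b
      · exact Or.inr (Or.inl hv)
      · rcases w.total u v with h | h
        · exact Or.inl (Or.inr ⟨hv, h⟩)
        · exact Or.inr (Or.inr ⟨hu, h⟩)
  trans u v x huv hvx := by
    rcases huv with h | ⟨hv, huv⟩
    · exact Or.inl h
    · rcases hvx with h | ⟨hx, hvx⟩
      · exact absurd h hv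
      · exact Or.inr ⟨hx, w.trans _ _ _ huv hvx⟩

/-- Pairwise majority margin of `a` over `b`. -/
noncomputable def margin [Fintype N] (P : N → WeakOrder C) (a b : C) : ℤ :=
  ((Finset.univ.filter fun i => (P i).strict a b).card : ℤ) -
    ((Finset.univ.filter fun i => (P i).strict b a).card : ℤ)

end CloneHoverEtc

section STV

variable {C N : Type*} [DecidableEq C] [Fintype C] [Fintype N]

/-- The supporters of `c` among remaining candidates `R`: voters with `c` in
their top indifference class within `R`. -/
noncomputable def suppSet (P : N → WeakOrder C) (R : Finset C) (c : C) : Finset N :=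
  Finset.univ.filter fun i => ∀ d ∈ R, (P i).rel c d

/-- A state of the Approval-STV computation: remaining candidates, selected
candidates, and the budget of each voter. -/
structure STVState (C N : Type*) where
  R : Finset C
  W : Finset C
  b : N → ℝ

/-- One step of Approval-STV with quota `q`: either select an eligible candidate
(whose supporters hold strictly more than `q` budget), charging its supporters a
total of exactly `q`, or, if no candidate is eligible, eliminate some candidate. -/
inductive STVStep (P : N → WeakOrder C) (q : ℝ) : STVState C N → STVState C N → Prop
  | select (R W : Finset C) (b b' : N → ℝ) (c : C) (hc : c ∈ R)
      (helig : q < ∑ i ∈ suppSet P R c, b i)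
      (hpay : ∀ i ∉ suppSet P R c, b' i = b i)
      (hdec : ∀ i : N, b' i ≤ b i)
      (hnn : ∀ i : N, 0 ≤ b' i)
      (htot : ∑ i ∈ suppSet P R c, b' i = (∑ i ∈ suppSet P R c, b i) - q) :
      STVStep P q ⟨R, W, b⟩ ⟨R.erase c, insert c W, b'⟩
  | eliminate (R W : Finset C) (b : N → ℝ) (c : C) (hc : c ∈ R)
      (hnone : ∀ c' ∈ R, (∑ i ∈ suppSet P R c', b i) ≤ q) :
      STVStep P q ⟨R, W, b⟩ ⟨R.erase c, W, b⟩

/-- `W` is a possible outcome of an execution of Approval-STV with quota `q`: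
starting from all candidates remaining, empty committee and unit budgets, some
sequence of steps ends with no candidate remaining and committee `W`. -/
def IsSTVOutcome (P : N → WeakOrder C) (q : ℝ) (W : Finset C) : Prop :=
  ∃ b : N → ℝ,
    Relation.ReflTransGen (STVStep P q) ⟨Finset.univ, ∅, fun _ => 1⟩ ⟨∅, W, b⟩

/-- The closure of `T` with respect to the voter group `S`. -/
noncomputable def closureSet (P : N → WeakOrder C) (S : Finset N) (T : Finset C) :
    Finset C :=
  Finset.univ.filter fun c => ∃ i ∈ S, ∃ t ∈ T, (P i).rel c t

end STV

/-- A weak order is `T`-supporting if every member of `T` is ranked weakly above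
every non-member. -/
def IsTSupporting {C : Type*} (w : WeakOrder C) (T : Finset C) : Prop :=
  ∀ t ∈ T, ∀ c, c ∉ T → w.rel t c


/-! ### Scores of a single vote given by a rank function -/

/-- Points given to `a` by the vote with rank function `ρ`, restricted to `A`. -/
noncomputable def pts (s : List ℕ → ℕ → ℝ) {m : ℕ} (ρ : Fin m → ℕ) (A : Finset (Fin m))
    (a : Fin m) : ℝ :=
  s ((ofRank ρ).orderType A) ((ofRank ρ).classIdx A a)

lemma strict_ofRank {m : ℕ} (ρ : Fin m → ℕ) (a b : Fin m) :
    (ofRank ρ).strict a b ↔ ρ a < ρ b := by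
  simp only [WeakOrder.strict, ofRank]; omega

lemma card_image_eq_of_iff {α : Type*} (F : Finset α) (f g : α → ℕ)
    (h : ∀ x ∈ F, ∀ y ∈ F, f x = f y ↔ g x = g y) :
    (F.image f).card = (F.image g).card := by
  have h1 : (F.image f) = (F.image (fun x => (f x, g x))).image Prod.fst := by
    rw [Finset.image_image]; rfl
  have h2 : (F.image g) = (F.image (fun x => (f x, g x))).image Prod.snd := by
    rw [Finset.image_image]; rfl
  have e1 : ((F.image (fun x => (f x, g x))).image Prod.fst).card =
      (F.image fun x => (f x, g x)).card := by
    apply Finset.card_image_of_injOn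
    intro p hp q hq hpq
    simp only [Finset.coe_image, Set.mem_image, Finset.mem_coe] at hp hq
    obtain ⟨x, hx, rfl⟩ := hp
    obtain ⟨y, hy, rfl⟩ := hq
    have := h x hx y hy
    simp_all
  have e2 : ((F.image (fun x => (f x, g x))).image Prod.snd).card =
      (F.image fun x => (f x, g x)).card := by
    apply Finset.card_image_of_injOn
    intro p hp q hq hpq
    simp only [Finset.coe_image, Set.mem_image, Finset.mem_coe] at hp hq
    obtain ⟨x, hx, rfl⟩ := hp
    obtain ⟨y, hy, rfl⟩ := hq
    have := h x hx y hy
    simp_all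
  rw [h1, h2, e1, e2]

lemma cardAbove_ofRank_lt {m : ℕ} (ρ : Fin m → ℕ) (A : Finset (Fin m)) {a b : Fin m}
    (ha : a ∈ A) (h : ρ a < ρ b) :
    (ofRank ρ).cardAbove A a < (ofRank ρ).cardAbove A b := by
  unfold WeakOrder.cardAbove
  apply Finset.card_lt_card
  rw [Finset.ssubset_iff_of_subset]
  · refine ⟨a, ?_, ?_⟩
    · simp [strict_ofRank, ha, h]
    · simp [strict_ofRank]
  · intro x
    simp only [Finset.mem_filter, strict_ofRank]
    rintro ⟨h1, h2⟩; exact ⟨h1, by omega⟩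

lemma cardAbove_ofRank_eq {m : ℕ} (ρ : Fin m → ℕ) (A : Finset (Fin m)) {a b : Fin m}
    (ha : a ∈ A) (hb : b ∈ A) :
    (ofRank ρ).cardAbove A a = (ofRank ρ).cardAbove A b ↔ ρ a = ρ b := by
  constructor
  · intro h
    rcases lt_trichotomy (ρ a) (ρ b) with h1 | h1 | h1
    · have := cardAbove_ofRank_lt ρ A ha h1; omega
    · exact h1
    · have := cardAbove_ofRank_lt ρ A hb h1; omega
  · intro h
    simp only [WeakOrder.cardAbove, strict_ofRank, h]

/-- The class index of `a` counts the distinct ranks occurring in `A` before that of `a`. -/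
lemma classIdx_ofRank {m : ℕ} (ρ : Fin m → ℕ) (A : Finset (Fin m)) (a : Fin m) :
    (ofRank ρ).classIdx A a = ((A.filter fun b => ρ b < ρ a).image ρ).card := by
  unfold WeakOrder.classIdx
  simp only [strict_ofRank]
  apply card_image_eq_of_iff
  intro x hx y hy
  exact cardAbove_ofRank_eq ρ A (Finset.mem_filter.1 hx).1 (Finset.mem_filter.1 hy).1

lemma numClasses_ofRank {m : ℕ} (ρ : Fin m → ℕ) (A : Finset (Fin m)) :
    (ofRank ρ).numClasses A = (A.image ρ).card := by
  unfold WeakOrder.numClasses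
  apply card_image_eq_of_iff
  intro x hx y hy
  exact cardAbove_ofRank_eq ρ A hx hy

lemma length_orderType {m : ℕ} (ρ : Fin m → ℕ) (A : Finset (Fin m)) :
    ((ofRank ρ).orderType A).length = (A.image ρ).card := by
  simp [WeakOrder.orderType, numClasses_ofRank]

lemma pts_congr (s : List ℕ → ℕ → ℝ) {m : ℕ} (ρ σ : Fin m → ℕ) (A : Finset (Fin m))
    (h : ∀ x ∈ A, ∀ y ∈ A, ρ x < ρ y ↔ σ x < σ y) {a : Fin m} (ha : a ∈ A) :
    pts s ρ A a = pts s σ A a := by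
  have heq : ∀ x ∈ A, ∀ y ∈ A, ρ x = ρ y ↔ σ x = σ y := by
    intro x hx y hy
    have := h x hx y hy
    have := h y hy x hx
    omega
  have hidx : ∀ x ∈ A, (ofRank ρ).classIdx A x = (ofRank σ).classIdx A x := by
    intro x hx
    rw [classIdx_ofRank, classIdx_ofRank]
    have : (A.filter fun b => ρ b < ρ x) = (A.filter fun b => σ b < σ x) :=
      Finset.filter_congr fun b hb => h b hb x hx
    rw [this]
    apply card_image_eq_of_iff
    intro y hy z hz
    exact heq y (Finset.mem_filter.1 hy).1 z (Finset.mem_filter.1 hz).1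
  have hn : (ofRank ρ).numClasses A = (ofRank σ).numClasses A := by
    rw [numClasses_ofRank, numClasses_ofRank]
    exact card_image_eq_of_iff _ _ _ heq
  unfold pts
  rw [hidx a ha]
  congr 1
  unfold WeakOrder.orderType
  rw [hn]
  apply List.map_congr_left
  intro j _
  congr 1
  exact Finset.filter_congr fun b hb => by rw [hidx b hb]

lemma pts_top (s : List ℕ → ℕ → ℝ) {m : ℕ} (ρ : Fin m → ℕ) (A : Finset (Fin m)) {a : Fin m}
    (h : ∀ d ∈ A, ρ a ≤ ρ d) : pts s ρ A a = s ((ofRank ρ).orderType A) 0 := by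
  unfold pts
  rw [classIdx_ofRank, Finset.filter_eq_empty_iff.2]
  · simp
  · intro x hx; have := h x hx; omega

lemma pts_bot {s : List ℕ → ℕ → ℝ} (hlz : LastZeroSys s) {m : ℕ} (ρ : Fin m → ℕ)
    (A : Finset (Fin m)) {a : Fin m} (ha : a ∈ A) (h : ∀ d ∈ A, ρ d ≤ ρ a) :
    pts s ρ A a = 0 := by
  have h1 : A.image ρ = insert (ρ a) ((A.filter fun b => ρ b < ρ a).image ρ) := by
    ext r
    simp only [Finset.mem_image, Finset.mem_insert, Finset.mem_filter]
    constructor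
    · rintro ⟨x, hx, rfl⟩
      rcases (h x hx).lt_or_eq with h2 | h2
      · exact Or.inr ⟨x, ⟨hx, h2⟩, rfl⟩
      · exact Or.inl h2
    · rintro (rfl | ⟨x, ⟨hx, _⟩, rfl⟩)
      · exact ⟨a, ha, rfl⟩
      · exact ⟨x, hx, rfl⟩
  have h2 : (A.image ρ).card = ((A.filter fun b => ρ b < ρ a).image ρ).card + 1 := by
    rw [h1, Finset.card_insert_of_notMem]
    simp only [Finset.mem_image, Finset.mem_filter]
    rintro ⟨x, ⟨_, h3⟩, h4⟩; omega
  have hl := length_orderType ρ A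
  have hne : (ofRank ρ).orderType A ≠ [] := by
    intro h0; rw [h0] at hl; simp at hl; omega
  have := hlz _ hne
  unfold pts
  rw [classIdx_ofRank]
  rwa [hl, h2, Nat.add_sub_cancel] at this

/-- If the ranks occurring in `A` are exactly `0, …, k - 1`, then ranks are class indices. -/
lemma type_of_range {m : ℕ} (ρ : Fin m → ℕ) (A : Finset (Fin m)) (k : ℕ)
    (h : A.image ρ = Finset.range k) :
    (ofRank ρ).orderType A = (List.range k).map (fun j => (A.filter fun a => ρ a = j).card) ∧
    ∀ a ∈ A, (ofRank ρ).classIdx A a = ρ a := by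
  have hidx : ∀ a ∈ A, (ofRank ρ).classIdx A a = ρ a := by
    intro a ha
    rw [classIdx_ofRank]
    have hak : ρ a < k := by
      have : ρ a ∈ A.image ρ := Finset.mem_image_of_mem _ ha
      rw [h] at this; simpa using this
    have : (A.filter fun b => ρ b < ρ a).image ρ = Finset.range (ρ a) := by
      ext r
      simp only [Finset.mem_image, Finset.mem_filter, Finset.mem_range]
      constructor
      · rintro ⟨x, ⟨_, hx⟩, rfl⟩; exact hx
      · intro hr
        have : r ∈ A.image ρ := by rw [h]; simp; omega
        obtain ⟨x, hx, rfl⟩ := Finset.mem_image.1 this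
        exact ⟨x, ⟨hx, hr⟩, rfl⟩
    rw [this, Finset.card_range]
  refine ⟨?_, hidx⟩
  unfold WeakOrder.orderType
  rw [numClasses_ofRank, h, Finset.card_range]
  apply List.map_congr_left
  intro j _
  congr 1
  exact Finset.filter_congr fun b hb => by rw [hidx b hb]

lemma type_linear {m : ℕ} (ρ : Fin m → ℕ) (A : Finset (Fin m)) (h : Set.InjOn ρ A) :
    (ofRank ρ).orderType A = List.replicate A.card 1 := by
  have hidx : ∀ a, (ofRank ρ).classIdx A a = (A.filter fun b => ρ b < ρ a).card := by
    intro a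
    rw [classIdx_ofRank, Finset.card_image_of_injOn]
    exact h.mono (by intro x; simp; tauto)
  have hlt : ∀ a ∈ A, (ofRank ρ).classIdx A a < A.card := by
    intro a ha
    rw [hidx]
    apply Finset.card_lt_card
    rw [Finset.ssubset_iff_of_subset (Finset.filter_subset _ _)]
    exact ⟨a, ha, by simp⟩
  have hmon : ∀ a ∈ A, ∀ b ∈ A, ρ a < ρ b →
      (ofRank ρ).classIdx A a < (ofRank ρ).classIdx A b := by
    intro a ha b hb hab
    rw [hidx, hidx]
    have := cardAbove_ofRank_lt ρ A ha hab
    simpa only [WeakOrder.cardAbove, strict_ofRank] using this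
  have hinj : Set.InjOn ((ofRank ρ).classIdx A) A := by
    intro a ha b hb hab
    apply h ha hb
    rcases lt_trichotomy (ρ a) (ρ b) with h1 | h1 | h1
    · have := hmon a ha b hb h1; omega
    · exact h1
    · have := hmon b hb a ha h1; omega
  have himg : A.image ((ofRank ρ).classIdx A) = Finset.range A.card := by
    apply Finset.eq_of_subset_of_card_le
    · intro j hj
      obtain ⟨a, ha, rfl⟩ := Finset.mem_image.1 hj
      simpa using hlt a ha
    · rw [Finset.card_range, Finset.card_image_of_injOn hinj]
  unfold WeakOrder.orderType
  rw [numClasses_ofRank, Finset.card_image_of_injOn h]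
  rw [List.eq_replicate_iff]
  refine ⟨by simp, ?_⟩
  intro b hb
  obtain ⟨j, hj, rfl⟩ := List.mem_map.1 hb
  have hj' : j ∈ A.image ((ofRank ρ).classIdx A) := by
    rw [himg]; simpa using hj
  obtain ⟨a, ha, rfl⟩ := Finset.mem_image.1 hj'
  rw [Finset.card_eq_one]
  refine ⟨a, ?_⟩
  ext x
  simp only [Finset.mem_filter, Finset.mem_singleton]
  constructor
  · rintro ⟨hx, hxa⟩; exact hinj hx ha hxa
  · rintro rfl; exact ⟨ha, rfl⟩

/-- The rank function of the dichotomous vote `T ≻ Tᶜ`. -/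
noncomputable def dich {m : ℕ} (T : Finset (Fin m)) : Fin m → ℕ := fun x => if x ∈ T then 0 else 1

lemma type_dich {m : ℕ} (T A : Finset (Fin m)) {a b : Fin m} (ha : a ∈ A) (haT : a ∈ T)
    (hb : b ∈ A) (hbT : b ∉ T) :
    (ofRank (dich T)).orderType A = [(A ∩ T).card, (A \ T).card] := by
  have h : A.image (dich T) = Finset.range 2 := by
    ext r
    simp only [Finset.mem_image, Finset.mem_range]
    constructor
    · rintro ⟨x, _, rfl⟩
      unfold dich; split_ifs <;> omega
    · intro hr
      interval_cases r
      · exact ⟨a, ha, by simp [dich, haT]⟩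
      · exact ⟨b, hb, by simp [dich, hbT]⟩
  rw [(type_of_range _ A 2 h).1]
  have e1 : (A.filter fun a => dich T a = 0) = A ∩ T := by
    ext x; simp [dich]
  have e2 : (A.filter fun a => dich T a = 1) = A \ T := by
    ext x; simp [dich]
  simp [List.range_succ, e1, e2]

/-! ### Profiles as lists of rank functions -/

/-- Total score of `a` in the profile `L`, restricted to `A`. -/
noncomputable def sc (s : List ℕ → ℕ → ℝ) {m : ℕ} (L : List (Fin m → ℕ)) (A : Finset (Fin m))
    (a : Fin m) : ℝ :=
  (L.map fun ρ => pts s ρ A a).sum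

/-- The profile of weak orders given by a list of rank functions. -/
def prof {m : ℕ} (L : List (Fin m → ℕ)) : Fin L.length → WeakOrder (Fin m) :=
  fun i => ofRank L[i]

/-- Winners of the elimination scoring rule in the profile `L`, restricted to `A`. -/
noncomputable def Win (s : List ℕ → ℕ → ℝ) {m : ℕ} (L : List (Fin m → ℕ)) (A : Finset (Fin m)) :
    Finset (Fin m) :=
  winners s (prof L) A

/-- `R` concatenated copies of the list `L`. -/
def rep {α : Type*} (R : ℕ) (L : List α) : List α := (List.replicate R L).flatten

lemma totalScore_prof (s : List ℕ → ℕ → ℝ) {m : ℕ} (L : List (Fin m → ℕ)) (A : Finset (Fin m))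
    (a : Fin m) : totalScore s (prof L) A a = sc s L A a := by
  unfold totalScore sc prof
  exact Fin.sum_univ_fun_getElem L (fun ρ => pts s ρ A a)

@[simp] lemma sc_nil (s : List ℕ → ℕ → ℝ) {m : ℕ} (A : Finset (Fin m)) (a : Fin m) :
    sc s [] A a = 0 := rfl

@[simp] lemma sc_cons (s : List ℕ → ℕ → ℝ) {m : ℕ} (ρ : Fin m → ℕ) (L : List (Fin m → ℕ))
    (A : Finset (Fin m)) (a : Fin m) : sc s (ρ :: L) A a = pts s ρ A a + sc s L A a := by
  simp [sc]

@[simp] lemma sc_append (s : List ℕ → ℕ → ℝ) {m : ℕ} (L L' : List (Fin m → ℕ))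
    (A : Finset (Fin m)) (a : Fin m) : sc s (L ++ L') A a = sc s L A a + sc s L' A a := by
  simp [sc]

@[simp] lemma sc_rep (s : List ℕ → ℕ → ℝ) {m : ℕ} (R : ℕ) (L : List (Fin m → ℕ))
    (A : Finset (Fin m)) (a : Fin m) : sc s (rep R L) A a = R * sc s L A a := by
  induction R with
  | zero => simp [rep]
  | succ R ih =>
    simp only [rep, List.replicate_succ, List.flatten_cons, sc_append] at ih ⊢
    rw [ih]; push_cast; ring

lemma sc_family (s : List ℕ → ℕ → ℝ) {m : ℕ} (X : Finset (Fin m)) (f : Fin m → Fin m → ℕ)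
    (A : Finset (Fin m)) (a : Fin m) :
    sc s (X.toList.map f) A a = ∑ x ∈ X, pts s (f x) A a := by
  simp [sc, Function.comp_def, Finset.sum_map_toList]

@[simp] lemma length_rep {α : Type*} (R : ℕ) (L : List α) : (rep R L).length = R * L.length := by
  simp [rep]

lemma mem_rep {α : Type*} {R : ℕ} {L : List α} {x : α} (h : x ∈ rep R L) : x ∈ L := by
  simp only [rep, List.mem_flatten, List.mem_replicate] at h
  obtain ⟨l, ⟨_, rfl⟩, h⟩ := h
  exact h

lemma mem_lowest (s : List ℕ → ℕ → ℝ) {m : ℕ} (L : List (Fin m → ℕ)) (A : Finset (Fin m))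
    (a : Fin m) : a ∈ lowest s (prof L) A ↔ a ∈ A ∧ ∀ d ∈ A, sc s L A a ≤ sc s L A d := by
  simp [lowest, totalScore_prof]

lemma Win_of_card_le (s : List ℕ → ℕ → ℝ) {m : ℕ} (L : List (Fin m → ℕ)) (A : Finset (Fin m))
    (h : A.card ≤ 1) : Win s L A = A := by
  unfold Win winners
  cases hA : A.card with
  | zero => rfl
  | succ n => simp [winnersAux, h]

lemma Win_step (s : List ℕ → ℕ → ℝ) {m : ℕ} (L : List (Fin m → ℕ)) (A : Finset (Fin m))
    (h : 2 ≤ A.card) (c : Fin m) : c ∈ Win s L A ↔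
      ∃ a ∈ A, (∀ d ∈ A, sc s L A a ≤ sc s L A d) ∧ c ∈ Win s L (A.erase a) := by
  unfold Win winners
  obtain ⟨n, hn⟩ : ∃ n, A.card = n + 1 := ⟨A.card - 1, by omega⟩
  have h' : ¬ A.card ≤ 1 := by omega
  rw [hn]
  simp only [winnersAux, if_neg h', Finset.mem_biUnion, mem_lowest]
  constructor
  · rintro ⟨a, ⟨ha, h1⟩, h2⟩
    refine ⟨a, ha, h1, ?_⟩
    rwa [Finset.card_erase_of_mem ha, hn]
  · rintro ⟨a, ha, h1, h2⟩
    refine ⟨a, ⟨ha, h1⟩, ?_⟩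
    rwa [Finset.card_erase_of_mem ha, hn] at h2

lemma Win_subset (s : List ℕ → ℕ → ℝ) {m : ℕ} (L : List (Fin m → ℕ)) (A : Finset (Fin m)) :
    Win s L A ⊆ A := by
  induction A using Finset.strongInduction with
  | H A ih =>
    by_cases h : A.card ≤ 1
    · rw [Win_of_card_le s L A h]
    · intro c hc
      obtain ⟨a, ha, _, h2⟩ := (Win_step s L A (by omega) c).1 hc
      exact Finset.mem_of_mem_erase (ih _ (Finset.erase_ssubset ha) h2)

lemma Win_nonempty (s : List ℕ → ℕ → ℝ) {m : ℕ} (L : List (Fin m → ℕ)) (A : Finset (Fin m))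
    (hA : A.Nonempty) : (Win s L A).Nonempty := by
  induction A using Finset.strongInduction with
  | H A ih =>
    by_cases h : A.card ≤ 1
    · rwa [Win_of_card_le s L A h]
    · obtain ⟨a, ha, h1⟩ := Finset.exists_min_image A (sc s L A) hA
      have hne : (A.erase a).Nonempty := by
        rw [← Finset.card_pos, Finset.card_erase_of_mem ha]; omega
      obtain ⟨c, hc⟩ := ih _ (Finset.erase_ssubset ha) hne
      exact ⟨c, (Win_step s L A (by omega) c).2 ⟨a, ha, h1, hc⟩⟩

/-- A candidate whose score is maximal on every subset containing it is a winner: as long as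
there are others, some lowest candidate is different from it. -/
lemma win_of_dom (s : List ℕ → ℕ → ℝ) {m : ℕ} (L : List (Fin m → ℕ)) (c : Fin m)
    (A : Finset (Fin m)) (hc : c ∈ A)
    (h : ∀ B ⊆ A, c ∈ B → 2 ≤ B.card → ∀ b ∈ B, b ≠ c → sc s L B b ≤ sc s L B c) :
    c ∈ Win s L A := by
  induction A using Finset.strongInduction with
  | H A ih =>
    by_cases h1 : A.card ≤ 1
    · rwa [Win_of_card_le s L A h1]
    · have hne : (A.erase c).Nonempty := by
        rw [← Finset.card_pos, Finset.card_erase_of_mem hc]; omega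
      obtain ⟨a, ha, h2⟩ := Finset.exists_min_image (A.erase c) (sc s L A) hne
      have hac := Finset.ne_of_mem_erase ha
      have haA := Finset.mem_of_mem_erase ha
      refine (Win_step s L A (by omega) c).2 ⟨a, haA, ?_, ?_⟩
      · intro d hd
        by_cases hdc : d = c
        · subst hdc; exact h A (Finset.Subset.refl _) hc (by omega) a haA hac
        · exact h2 d (Finset.mem_erase.2 ⟨hdc, hd⟩)
      · apply ih _ (Finset.erase_ssubset haA) (Finset.mem_erase.2 ⟨hac.symm, hc⟩)
        intro B hB
        exact h B (hB.trans (Finset.erase_subset _ _))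

/-- If `a` has lowest score in `A` and `c` dominates once `a` is gone, then `c` wins. -/
lemma win_elim_dom (s : List ℕ → ℕ → ℝ) {m : ℕ} (L : List (Fin m → ℕ)) (a c : Fin m)
    (A : Finset (Fin m)) (ha : a ∈ A) (hc : c ∈ A) (hac : a ≠ c)
    (hlow : ∀ b ∈ A, b ≠ a → sc s L A a ≤ sc s L A b)
    (h : ∀ B ⊆ A, a ∉ B → c ∈ B → 2 ≤ B.card → ∀ b ∈ B, b ≠ c → sc s L B b ≤ sc s L B c) :
    c ∈ Win s L A := by
  have h2 : 2 ≤ A.card := Finset.one_lt_card.2 ⟨a, ha, c, hc, hac⟩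
  refine (Win_step s L A h2 c).2 ⟨a, ha, ?_, ?_⟩
  · intro d hd
    by_cases hda : d = a
    · rw [hda]
    · exact hlow d hd hda
  · apply win_of_dom s L c _ (Finset.mem_erase.2 ⟨hac.symm, hc⟩)
    intro B hB
    exact h B (hB.trans (Finset.erase_subset _ _)) (fun h' => (Finset.mem_erase.1 (hB h')).1 rfl)

lemma notMem_Win_of_lt (s : List ℕ → ℕ → ℝ) {m : ℕ} (L : List (Fin m → ℕ)) (a : Fin m)
    (A : Finset (Fin m)) (ha : a ∈ A) (h2 : 2 ≤ A.card)
    (hlow : ∀ b ∈ A, b ≠ a → sc s L A a < sc s L A b) : a ∉ Win s L A := by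
  intro h
  obtain ⟨x, hx, h1, h3⟩ := (Win_step s L A h2 a).1 h
  by_cases hxa : x = a
  · subst hxa
    exact (Finset.mem_erase.1 (Win_subset s L _ h3)).1 rfl
  · exact absurd (h1 a ha) (not_le.2 (hlow x hx hxa))

/-- Scoring systems satisfying all hypotheses of the theorem: nonnegative, ending in zero,
monotone, with a clone-independent elimination rule that respects cohesive majorities. -/
structure Nice (s : List ℕ → ℕ → ℝ) : Prop where
  nn : NonnegSys s
  lz : LastZeroSys s
  mono : MonotoneSys s
  clones : ∀ (m n : ℕ) (P : Fin n → WeakOrder (Fin m))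
        (A X : Finset (Fin m)), IsCloneSet P A X → ∀ xhat ∈ X,
      (∀ c ∈ A, c ∉ X →
        (c ∈ winners s P A ↔ c ∈ winners s P (A \ X.erase xhat))) ∧
      (xhat ∈ winners s P (A \ X.erase xhat) ↔
        (X ∩ winners s P A).Nonempty)
  maj : ∀ (m n : ℕ) (P : Fin n → WeakOrder (Fin m))
        (A : Finset (Fin m)) (S : Finset (Fin n)),
      n < 2 * S.card →
      (∃ c ∈ A, ∀ i ∈ S, c ∈ (P i).topSet A) →
      winners s P A ⊆ S.biUnion fun i => (P i).topSet A

/-- Cohesive majorities for list profiles: if the voters of `L₁` outnumber those of `L₂` and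
all have `a` on top, then each winner is on top of some vote in `L₁`. -/
lemma Nice.majW {s : List ℕ → ℕ → ℝ} (hs : Nice s) {m : ℕ} (L₁ L₂ : List (Fin m → ℕ))
    (A : Finset (Fin m)) (hlen : L₂.length < L₁.length) (a : Fin m) (ha : a ∈ A)
    (htop : ∀ ρ ∈ L₁, ∀ d ∈ A, ρ a ≤ ρ d) {c : Fin m} (hc : c ∈ Win s (L₁ ++ L₂) A) :
    ∃ ρ ∈ L₁, ∀ d ∈ A, ρ c ≤ ρ d := by
  set L := L₁ ++ L₂ with hL
  have hl : L.length = L₁.length + L₂.length := by simp [hL]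
  let S : Finset (Fin L.length) := Finset.univ.filter fun i => i.val < L₁.length
  have hScard : S.card = L₁.length := by
    have : S = (Finset.univ : Finset (Fin L₁.length)).map
        (Fin.castLEEmb (by omega : L₁.length ≤ L.length)) := by
      ext i
      simp only [S, Finset.mem_filter, Finset.mem_univ, true_and, Finset.mem_map]
      constructor
      · intro h; exact ⟨⟨i, h⟩, by ext; rfl⟩
      · rintro ⟨j, rfl⟩; exact j.2
    rw [this]; simp
  have hmemS : ∀ i ∈ S, L[i] ∈ L₁ := by
    intro i hi
    have hi' : i.val < L₁.length := by simpa [S] using hi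
    have : L[i.val] = L₁[i.val] := by
      simp only [hL]; exact List.getElem_append_left hi'
    change L[i.val] ∈ L₁
    rw [this]
    exact List.getElem_mem _
  have := hs.maj m L.length (prof L) A S (by omega) ⟨a, ha, by
    intro i hi
    simp only [WeakOrder.topSet, Finset.mem_filter]
    exact ⟨ha, fun d hd => htop _ (hmemS i hi) d hd⟩⟩ hc
  obtain ⟨i, hi, h⟩ := Finset.mem_biUnion.1 this
  simp only [WeakOrder.topSet, Finset.mem_filter] at h
  exact ⟨L[i], hmemS i hi, h.2⟩

/-- Condition for `X` to be a clone set in a profile of rank functions. -/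
def ClonesL {m : ℕ} (L : List (Fin m → ℕ)) (X : Finset (Fin m)) : Prop :=
  ∀ ρ ∈ L, ∀ c, c ∉ X →
    (∀ x ∈ X, ρ x < ρ c) ∨ (∀ x ∈ X, ρ x = ρ c) ∨ (∀ x ∈ X, ρ c < ρ x)

lemma isCloneSet_prof {m : ℕ} (L : List (Fin m → ℕ)) (X : Finset (Fin m)) (h : ClonesL L X) :
    IsCloneSet (prof L) Finset.univ X := by
  refine ⟨Finset.subset_univ _, fun i c _ hc => ?_⟩
  rcases h L[i] (List.getElem_mem _) c hc with h | h | h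
  · exact Or.inl fun x hx => (strict_ofRank _ _ _).2 (h x hx)
  · exact Or.inr (Or.inl fun x hx => ⟨(h x hx).le, (h x hx).ge⟩)
  · exact Or.inr (Or.inr fun x hx => (strict_ofRank _ _ _).2 (h x hx))

/-- Clone independence for list profiles, for candidates outside the clone set. -/
lemma Nice.cloneW {s : List ℕ → ℕ → ℝ} (hs : Nice s) {m : ℕ} (L : List (Fin m → ℕ))
    (X : Finset (Fin m)) (h : ClonesL L X) {x c : Fin m} (hx : x ∈ X) (hc : c ∉ X) :
    c ∈ Win s L Finset.univ ↔ c ∈ Win s L (Finset.univ \ X.erase x) :=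
  (hs.clones _ _ _ _ _ (isCloneSet_prof L X h) x hx).1 c (Finset.mem_univ _) hc

/-- Clone independence for list profiles: a winning clone still wins when it is the only one kept. -/
lemma Nice.cloneX {s : List ℕ → ℕ → ℝ} (hs : Nice s) {m : ℕ} (L : List (Fin m → ℕ))
    (X : Finset (Fin m)) (h : ClonesL L X) {x : Fin m} (hx : x ∈ X)
    (hw : x ∈ Win s L Finset.univ) : x ∈ Win s L (Finset.univ \ X.erase x) :=
  (hs.clones _ _ _ _ _ (isCloneSet_prof L X h) x hx).2.2 ⟨x, Finset.mem_inter.2 ⟨hx, hw⟩⟩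

/-! ### Votes scored like approval votes -/

/-- The first score value of the linear order type on `k` candidates. -/
noncomputable def Al (s : List ℕ → ℕ → ℝ) (k : ℕ) : ℝ := s (List.replicate k 1) 0

/-- `1` if `a` is in the top class of `ρ` on `A` and this is not the only class, else `0`. -/
noncomputable def app {m : ℕ} (ρ : Fin m → ℕ) (A : Finset (Fin m)) (a : Fin m) : ℝ :=
  if (∀ d ∈ A, ρ a ≤ ρ d) ∧ ∃ d ∈ A, ρ a < ρ d then 1 else 0

/-- The vote `ρ` is scored on `A` by approval, with the weight of a linear vote. -/
def Good (s : List ℕ → ℕ → ℝ) {m : ℕ} (ρ : Fin m → ℕ) (A : Finset (Fin m)) : Prop :=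
  ∀ a ∈ A, pts s ρ A a = app ρ A a * Al s A.card

/-- Number of nontrivial approvals of `a` on `A` in the profile `L`. -/
noncomputable def ap {m : ℕ} (L : List (Fin m → ℕ)) (A : Finset (Fin m)) (a : Fin m) : ℝ :=
  (L.map fun ρ => app ρ A a).sum

@[simp] lemma ap_nil {m : ℕ} (A : Finset (Fin m)) (a : Fin m) : ap [] A a = 0 := rfl

@[simp] lemma ap_cons {m : ℕ} (ρ : Fin m → ℕ) (L : List (Fin m → ℕ))
    (A : Finset (Fin m)) (a : Fin m) : ap (ρ :: L) A a = app ρ A a + ap L A a := by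
  simp [ap]

@[simp] lemma ap_append {m : ℕ} (L L' : List (Fin m → ℕ))
    (A : Finset (Fin m)) (a : Fin m) : ap (L ++ L') A a = ap L A a + ap L' A a := by
  simp [ap]

@[simp] lemma ap_rep {m : ℕ} (R : ℕ) (L : List (Fin m → ℕ))
    (A : Finset (Fin m)) (a : Fin m) : ap (rep R L) A a = R * ap L A a := by
  induction R with
  | zero => simp [rep]
  | succ R ih =>
    simp only [rep, List.replicate_succ, List.flatten_cons, ap_append] at ih ⊢
    rw [ih]; push_cast; ring

lemma ap_family {m : ℕ} (X : Finset (Fin m)) (f : Fin m → Fin m → ℕ)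
    (A : Finset (Fin m)) (a : Fin m) :
    ap (X.toList.map f) A a = ∑ x ∈ X, app (f x) A a := by
  simp [ap, Function.comp_def, Finset.sum_map_toList]

lemma sc_eq_ap {s : List ℕ → ℕ → ℝ} {m : ℕ} {L : List (Fin m → ℕ)} {A : Finset (Fin m)}
    (h : ∀ ρ ∈ L, Good s ρ A) {a : Fin m} (ha : a ∈ A) : sc s L A a = ap L A a * Al s A.card := by
  induction L with
  | nil => simp
  | cons ρ L ih =>
    rw [sc_cons, ap_cons, h ρ (by simp) a ha, ih fun ρ' h' => h ρ' (by simp [h'])]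
    ring

lemma app_nonneg {m : ℕ} (ρ : Fin m → ℕ) (A : Finset (Fin m)) (a : Fin m) : 0 ≤ app ρ A a := by
  unfold app; split_ifs <;> norm_num

lemma app_le_one {m : ℕ} (ρ : Fin m → ℕ) (A : Finset (Fin m)) (a : Fin m) : app ρ A a ≤ 1 := by
  unfold app; split_ifs <;> norm_num

lemma app_one {m : ℕ} {ρ : Fin m → ℕ} {A : Finset (Fin m)} {a : Fin m}
    (h : ∀ d ∈ A, ρ a ≤ ρ d) {d : Fin m} (hd : d ∈ A) (hlt : ρ a < ρ d) : app ρ A a = 1 :=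
  if_pos ⟨h, d, hd, hlt⟩

lemma app_zero {m : ℕ} {ρ : Fin m → ℕ} {A : Finset (Fin m)} {a d : Fin m}
    (hd : d ∈ A) (hlt : ρ d < ρ a) : app ρ A a = 0 :=
  if_neg fun h => absurd (h.1 d hd) (not_le.2 hlt)

lemma app_bot {m : ℕ} {ρ : Fin m → ℕ} {A : Finset (Fin m)} {a : Fin m}
    (h : ∀ d ∈ A, ρ d ≤ ρ a) : app ρ A a = 0 :=
  if_neg fun ⟨_, d, hd, hlt⟩ => absurd (h d hd) (not_le.2 hlt)

lemma pts_nonneg {s : List ℕ → ℕ → ℝ} (hs : Nice s) {m : ℕ} (ρ : Fin m → ℕ)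
    (A : Finset (Fin m)) (a : Fin m) : 0 ≤ pts s ρ A a := hs.nn _ _

lemma pts_le_first {s : List ℕ → ℕ → ℝ} (hs : Nice s) {m : ℕ} (ρ : Fin m → ℕ)
    (A : Finset (Fin m)) (a : Fin m) : pts s ρ A a ≤ s ((ofRank ρ).orderType A) 0 :=
  hs.mono _ _ _ (Nat.zero_le _)

lemma pts_nontop_le {s : List ℕ → ℕ → ℝ} (hs : Nice s) {m : ℕ} (ρ : Fin m → ℕ)
    (A : Finset (Fin m)) {a d : Fin m} (hd : d ∈ A) (hlt : ρ d < ρ a) :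
    pts s ρ A a ≤ s ((ofRank ρ).orderType A) 1 := by
  apply hs.mono
  rw [classIdx_ofRank, Nat.succ_le_iff, Finset.card_pos]
  exact ⟨ρ d, Finset.mem_image_of_mem _ (Finset.mem_filter.2 ⟨hd, hlt⟩)⟩

lemma pts_second (s : List ℕ → ℕ → ℝ) {m : ℕ} (ρ : Fin m → ℕ)
    (A : Finset (Fin m)) {a d : Fin m} (hd : d ∈ A) (hlt : ρ d < ρ a)
    (h : ∀ e ∈ A, ρ e < ρ a → ρ e = ρ d) :
    pts s ρ A a = s ((ofRank ρ).orderType A) 1 := by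
  unfold pts
  congr 1
  rw [classIdx_ofRank, Finset.card_eq_one]
  refine ⟨ρ d, ?_⟩
  ext r
  simp only [Finset.mem_image, Finset.mem_filter, Finset.mem_singleton]
  constructor
  · rintro ⟨x, ⟨hx, hx'⟩, rfl⟩; exact h x hx hx'
  · rintro rfl; exact ⟨d, ⟨hd, hlt⟩, rfl⟩

lemma good_of {s : List ℕ → ℕ → ℝ} (hs : Nice s) {m : ℕ} {ρ : Fin m → ℕ} {A : Finset (Fin m)}
    (h0 : ∀ a ∈ A, ∀ d ∈ A, ρ a < ρ d → s ((ofRank ρ).orderType A) 0 = Al s A.card)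
    (h1 : ∀ a ∈ A, ∀ d ∈ A, ∀ e ∈ A, ρ d < ρ a → ρ a < ρ e → pts s ρ A a = 0) :
    Good s ρ A := by
  intro a ha
  by_cases hbot : ∀ d ∈ A, ρ d ≤ ρ a
  · rw [pts_bot hs.lz ρ A ha hbot, app_bot hbot, zero_mul]
  · push Not at hbot
    obtain ⟨e, he, hae⟩ := hbot
    by_cases htop : ∀ d ∈ A, ρ a ≤ ρ d
    · rw [pts_top s ρ A htop, app_one htop he hae, h0 a ha e he hae, one_mul]
    · push Not at htop
      obtain ⟨d, hd, hda⟩ := htop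
      rw [h1 a ha d hd e he hda hae, app_zero hd hda, zero_mul]

/-- A vote indifferent between all members of `A` gives no points. -/
lemma good_const {s : List ℕ → ℕ → ℝ} (hs : Nice s) {m : ℕ} {ρ : Fin m → ℕ}
    {A : Finset (Fin m)} (h : ∀ a ∈ A, ∀ b ∈ A, ρ a = ρ b) : Good s ρ A := by
  apply good_of hs
  · intro a ha d hd hlt; have := h a ha d hd; omega
  · intro a ha d hd e he hlt; have := h a ha d hd; omega

lemma Good.congr {s : List ℕ → ℕ → ℝ} {m : ℕ} {ρ σ : Fin m → ℕ}
    {A : Finset (Fin m)} (hσ : Good s σ A) (h : ∀ x ∈ A, ∀ y ∈ A, ρ x < ρ y ↔ σ x < σ y) :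
    Good s ρ A := by
  intro a ha
  rw [pts_congr s ρ σ A h ha, hσ a ha]
  have : app ρ A a = app σ A a := by
    unfold app
    congr 1
    simp only [eq_iff_iff]
    constructor
    · rintro ⟨h1, d, hd, h2⟩
      exact ⟨fun x hx => not_lt.1 fun h' => absurd (h1 x hx) (not_le.2 ((h x hx a ha).2 h')),
        d, hd, (h a ha d hd).1 h2⟩
    · rintro ⟨h1, d, hd, h2⟩
      exact ⟨fun x hx => not_lt.1 fun h' => absurd (h1 x hx) (not_le.2 ((h x hx a ha).1 h')),
        d, hd, (h a ha d hd).2 h2⟩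
  rw [this]

lemma good_card_two {s : List ℕ → ℕ → ℝ} (hs : Nice s) {m : ℕ} (ρ : Fin m → ℕ)
    {A : Finset (Fin m)} (hA : A.card ≤ 2) : Good s ρ A := by
  have key : ∀ a ∈ A, ∀ d ∈ A, ∀ e ∈ A, a ≠ d → e = a ∨ e = d := by
    intro a ha d hd e he had
    by_contra hcon
    push Not at hcon
    have : 2 < A.card := Finset.two_lt_card.2 ⟨a, ha, d, hd, e, he, had, hcon.1.symm, hcon.2.symm⟩
    omega
  apply good_of hs
  · intro a ha d hd hlt
    rw [type_linear ρ A, Al]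
    intro x hx y hy hxy
    have had : a ≠ d := by rintro rfl; omega
    rcases key a ha d hd x hx had with rfl | rfl <;> rcases key _ ha _ hd y hy had with rfl | rfl
    all_goals first | rfl | omega
  · intro a ha d hd e he h1 h2
    rcases key a ha d hd e he (by rintro rfl; omega) with rfl | rfl <;> omega

/-! ### Particular votes -/

/-- The vote with `c` first and the others following in the order of their indices. -/
def lin1 {m : ℕ} (c : Fin m) : Fin m → ℕ := fun x => if x = c then 0 else x + 1

/-- The linear vote starting with `a ≻ c`. -/
def lin2 {m : ℕ} (a c : Fin m) : Fin m → ℕ := fun x => if x = a then 0 else if x = c then 1 else x + 2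

/-- The linear vote starting with `c ≻ b` and ending with `a`. -/
def linL {m : ℕ} (a c b : Fin m) : Fin m → ℕ :=
  fun x => if x = a then m + 2 else if x = c then 0 else if x = b then 1 else x + 2

/-- The vote in which only `c` is not in the top class. -/
noncomputable def allBut {m : ℕ} (c : Fin m) : Fin m → ℕ := dich (Finset.univ.erase c)

lemma allBut_apply {m : ℕ} (c x : Fin m) : allBut c x = if x = c then 1 else 0 := by
  by_cases h : x = c <;> simp [allBut, dich, h]

lemma lin1_inj {m : ℕ} (c : Fin m) : Function.Injective (lin1 c) := by
  intro x y h
  simp only [lin1] at h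
  split_ifs at h <;> first | (simp_all; done) | (ext; omega)

lemma lin2_inj {m : ℕ} (a c : Fin m) : Function.Injective (lin2 a c) := by
  intro x y h
  simp only [lin2] at h
  split_ifs at h <;> first | (simp_all; done) | (ext; omega)

lemma linL_inj {m : ℕ} (a c b : Fin m) : Function.Injective (linL a c b) := by
  intro x y h
  have := x.2
  have := y.2
  simp only [linL] at h
  split_ifs at h <;> first | (simp_all; done) | (ext; omega)

lemma lin1_first {m : ℕ} (c x : Fin m) : lin1 c c ≤ lin1 c x := by simp [lin1]

lemma lin2_first {m : ℕ} (a c x : Fin m) : lin2 a c a ≤ lin2 a c x := by simp [lin2]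

/-- The score of a first-ranked candidate in a linear vote on all candidates. -/
lemma pts_lin_top (s : List ℕ → ℕ → ℝ) {m : ℕ} {ρ : Fin m → ℕ} (hρ : Function.Injective ρ)
    {a : Fin m} (h : ∀ x, ρ a ≤ ρ x) : pts s ρ Finset.univ a = Al s m := by
  rw [pts_top s ρ _ fun d _ => h d, type_linear ρ _ hρ.injOn, Al]
  simp

lemma type_allBut {m : ℕ} (A : Finset (Fin m)) {c b : Fin m} (hc : c ∈ A) (hb : b ∈ A)
    (hbc : b ≠ c) : (ofRank (allBut c)).orderType A = [A.card - 1, 1] := by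
  unfold allBut
  rw [type_dich _ A hb (by simp [hbc]) hc (by simp)]
  have h1 : A ∩ Finset.univ.erase c = A.erase c := by ext x; simp [and_comm]
  have h2 : A \ Finset.univ.erase c = {c} := by
    ext x; simp only [Finset.mem_sdiff, Finset.mem_erase, Finset.mem_univ, and_true, not_not,
      Finset.mem_singleton]
    constructor
    · exact fun h => h.2
    · rintro rfl; exact ⟨hc, rfl⟩
  rw [h1, h2, Finset.card_erase_of_mem hc]; simp

lemma pts_allBut (s : List ℕ → ℕ → ℝ) {m : ℕ} (A : Finset (Fin m)) {c b : Fin m} (hc : c ∈ A)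
    (hb : b ∈ A) (hbc : b ≠ c) : pts s (allBut c) A b = s [A.card - 1, 1] 0 := by
  rw [pts_top, type_allBut A hc hb hbc]
  intro d _; simp [allBut_apply, hbc]

lemma pts_allBut_self {s : List ℕ → ℕ → ℝ} (hs : Nice s) {m : ℕ} (A : Finset (Fin m)) {c : Fin m}
    (hc : c ∈ A) : pts s (allBut c) A c = 0 := by
  apply pts_bot hs.lz _ _ hc
  intro d _; simp only [allBut_apply]; split_ifs <;> simp

lemma pts_allBut_out {s : List ℕ → ℕ → ℝ} (hs : Nice s) {m : ℕ} (A : Finset (Fin m)) {c b : Fin m}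
    (hc : c ∉ A) (hb : b ∈ A) : pts s (allBut c) A b = 0 := by
  apply pts_bot hs.lz _ _ hb
  intro d hd
  have : d ≠ c := fun h => hc (h ▸ hd)
  simp [allBut_apply, this]

/-! ### Linear votes -/

lemma Win_congr (s : List ℕ → ℕ → ℝ) {m : ℕ} (L L' : List (Fin m → ℕ))
    (h : ∀ A a, sc s L A a = sc s L' A a) (A : Finset (Fin m)) : Win s L A = Win s L' A := by
  induction A using Finset.strongInduction with
  | H A ih =>
    by_cases h1 : A.card ≤ 1
    · rw [Win_of_card_le s L A h1, Win_of_card_le s L' A h1]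
    · ext c
      rw [Win_step s L A (by omega), Win_step s L' A (by omega)]
      constructor
      · rintro ⟨a, ha, h2, h3⟩
        exact ⟨a, ha, by simpa only [h] using h2, by rwa [← ih _ (Finset.erase_ssubset ha)]⟩
      · rintro ⟨a, ha, h2, h3⟩
        exact ⟨a, ha, by simpa only [h] using h2, by rwa [ih _ (Finset.erase_ssubset ha)]⟩

/-- `α_m > 0`: otherwise all candidates tie in a one-voter profile, and the voter's favourite can
be eliminated first. -/
lemma Al_pos {s : List ℕ → ℕ → ℝ} (hs : Nice s) {m : ℕ} (hm : 2 ≤ m) : 0 < Al s m := by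
  by_contra hcon
  have h0 : Al s m = 0 := le_antisymm (not_lt.1 hcon) (hs.nn _ _)
  let a : Fin m := ⟨0, by omega⟩
  let b : Fin m := ⟨1, by omega⟩
  have hab : b ≠ a := by simp [a, b, Fin.ext_iff]
  have hpts : ∀ x, pts s (lin1 a) Finset.univ x = 0 := by
    intro x
    apply le_antisymm _ (pts_nonneg hs _ _ _)
    have := pts_le_first hs (lin1 a) Finset.univ x
    rw [type_linear _ _ (lin1_inj a).injOn] at this
    simpa [Al] using this.trans_eq (by simpa [Al] using h0)
  obtain ⟨c, hc⟩ := Win_nonempty s [lin1 a] (Finset.univ.erase a) ⟨b, by simp [hab]⟩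
  have hca : c ≠ a := Finset.ne_of_mem_erase (Win_subset _ _ _ hc)
  have hw : c ∈ Win s [lin1 a] Finset.univ := by
    refine (Win_step s _ _ (by simpa using hm) c).2 ⟨a, by simp, ?_, hc⟩
    intro d _; simp [hpts]
  obtain ⟨ρ, hρ, htop⟩ := hs.majW [lin1 a] [] Finset.univ (by simp) a (by simp)
    (by intro ρ hρ d _; simp only [List.mem_singleton] at hρ; subst hρ; exact lin1_first a d)
    (c := c) (by simpa using hw)
  simp only [List.mem_singleton] at hρ
  subst hρ
  have := htop a (by simp)
  simp [lin1, hca] at this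

/-- `s[m-1,1]₁ ≤ α_m`: otherwise `N` votes with `c` last, against `N + 1` votes with `c` first,
make `c` lose although `c` wins once the others, which are clones, are merged. -/
lemma allBut_le {s : List ℕ → ℕ → ℝ} (hs : Nice s) {m : ℕ} (hm : 2 ≤ m) :
    s [m - 1, 1] 0 ≤ Al s m := by
  by_contra hcon
  push Not at hcon
  obtain ⟨N, hN⟩ := exists_nat_gt (Al s m / (s [m - 1, 1] 0 - Al s m))
  rw [div_lt_iff₀ (by linarith)] at hN
  let c : Fin m := ⟨0, by omega⟩
  let b : Fin m := ⟨1, by omega⟩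
  have hbc : b ≠ c := by simp [c, b, Fin.ext_iff]
  let L := rep N [allBut c] ++ rep (N + 1) [lin1 c]
  have hcl : ClonesL L (Finset.univ.erase c) := by
    intro ρ hρ d hd
    have hd : d = c := by simpa using hd
    subst hd
    rcases List.mem_append.1 hρ with h | h <;> have h := mem_rep h <;>
      simp only [List.mem_singleton] at h <;> subst h
    · refine Or.inl fun x hx => ?_
      simp [allBut_apply, Finset.ne_of_mem_erase hx]
    · refine Or.inr (Or.inr fun x hx => ?_)
      simp [lin1, Finset.ne_of_mem_erase hx]
  have h1 := hs.cloneW L _ hcl (x := b) (c := c) (by simp [hbc]) (by simp)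
  have h2 : c ∉ Win s L Finset.univ := by
    apply notMem_Win_of_lt _ _ _ _ (by simp) (by simpa using hm)
    intro x _ hx
    simp only [L, sc_append, sc_rep, sc_cons, sc_nil, add_zero,
      pts_allBut s Finset.univ (Finset.mem_univ c) (Finset.mem_univ x) hx,
      pts_allBut_self hs Finset.univ (Finset.mem_univ c), pts_lin_top s (lin1_inj c) (lin1_first c)]
    have := pts_nonneg hs (lin1 c) Finset.univ x
    have h3 : 0 ≤ ((N + 1 : ℕ) : ℝ) * pts s (lin1 c) Finset.univ x := by positivity
    simp only [Finset.card_univ, Fintype.card_fin]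
    push_cast at h3 ⊢
    nlinarith
  apply h2
  rw [h1]
  apply win_of_dom
  · simp
  · intro B hB hcB hB2 x hx hxc
    have hB' : B.card ≤ 2 := by
      refine (Finset.card_le_card (t := {c, b}) ?_).trans Finset.card_le_two
      intro y hy
      have := hB hy
      simp only [Finset.mem_sdiff, Finset.mem_erase, Finset.mem_univ, and_true, true_and] at this
      simp only [Finset.mem_insert, Finset.mem_singleton]; tauto
    have hg : ∀ ρ ∈ L, Good s ρ B := fun ρ _ => good_card_two hs ρ hB'
    rw [sc_eq_ap hg hx, sc_eq_ap hg hcB]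
    apply mul_le_mul_of_nonneg_right _ (hs.nn _ _)
    have e1 : app (lin1 c) B c = 1 := app_one (fun d _ => lin1_first c d) hx (by simp [lin1, hxc])
    have e2 : app (lin1 c) B x = 0 := app_zero hcB (by simp [lin1, hxc])
    have e3 := app_le_one (allBut c) B x
    have e4 := app_nonneg (allBut c) B c
    simp only [L, ap_append, ap_rep, ap_cons, ap_nil, e1, e2]
    push_cast
    have : (0:ℝ) ≤ N := by positivity
    nlinarith

/-- The second score value of linear order types vanishes. Otherwise one can make `a` lowest while
a bare majority has `a` on top; once `a` is gone a majority has `c` as its unique top candidate,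
so that `c` wins although no voter of the first majority has `c` on top. -/
lemma lin_second {s : List ℕ → ℕ → ℝ} (hs : Nice s) {m : ℕ} (hm : 3 ≤ m) :
    s (List.replicate m 1) 1 = 0 := by
  by_contra hcon
  set t := s (List.replicate m 1) 1 with ht
  have htpos : 0 < t := lt_of_le_of_ne (hs.nn _ _) (Ne.symm hcon)
  obtain ⟨N, hN⟩ := exists_nat_gt (Al s m / t)
  rw [div_lt_iff₀ htpos] at hN
  have hα : 0 < Al s m := Al_pos hs (by omega)
  have hNpos : 0 < N := by
    rcases Nat.eq_zero_or_pos N with h | h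
    · subst h; simp at hN; linarith
    · exact h
  let a : Fin m := ⟨0, by omega⟩
  let c : Fin m := ⟨1, by omega⟩
  have hca : c ≠ a := by simp [a, c, Fin.ext_iff]
  let X : Finset (Fin m) := (Finset.univ.erase a).erase c
  have hX : X.card = m - 2 := by
    simp only [X]
    rw [Finset.card_erase_of_mem (by simp [hca]), Finset.card_erase_of_mem (by simp)]
    simp; omega
  obtain ⟨p, hp⟩ : ∃ p, p + N = N * N * (m - 2) + 1 := by
    have : N ≤ N * N * (m - 2) := by
      have h1 : 1 ≤ m - 2 := by omega
      nlinarith [Nat.mul_le_mul_left (N * N) h1]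
    exact ⟨N * N * (m - 2) + 1 - N, by omega⟩
  let F : List (Fin m → ℕ) := X.toList.map (linL a c)
  let L := (rep p [allBut c] ++ rep N [lin2 a c]) ++ rep (N * N) F
  have hFlen : F.length = m - 2 := by simp [F, hX]
  have hF : ∀ ρ ∈ F, ∃ b, b ≠ a ∧ b ≠ c ∧ ρ = linL a c b := by
    intro ρ hρ
    simp only [F, List.mem_map, Finset.mem_toList] at hρ
    obtain ⟨b, hb, rfl⟩ := hρ
    simp only [X, Finset.mem_erase] at hb
    exact ⟨b, hb.2.1, hb.1, rfl⟩
  -- `c` wins once `a` has been eliminated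
  have hwin : c ∈ Win s L (Finset.univ.erase a) := by
    have hcA : c ∈ Finset.univ.erase a := by simp [hca]
    let L' := (rep N [lin2 a c] ++ rep (N * N) F) ++ rep p [allBut c]
    have hW : Win s L (Finset.univ.erase a) = Win s L' (Finset.univ.erase a) :=
      Win_congr s L L' (by intro A x; simp only [L, L', sc_append]; ring) _
    rw [hW]
    obtain ⟨d, hd⟩ := Win_nonempty s L' (Finset.univ.erase a) ⟨c, hcA⟩
    have hda := Finset.ne_of_mem_erase (Win_subset _ _ _ hd)
    obtain ⟨ρ, hρ, htop⟩ := hs.majW (rep N [lin2 a c] ++ rep (N * N) F) (rep p [allBut c])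
      (Finset.univ.erase a) (by
        simp only [List.length_append, length_rep, hFlen, List.length_cons, List.length_nil]; omega)
      c hcA (by
        intro ρ hρ e he
        have hea := Finset.ne_of_mem_erase he
        rcases List.mem_append.1 hρ with h | h <;> have h := mem_rep h
        · simp only [List.mem_singleton] at h; subst h
          simp only [lin2, hea, hca, if_false, if_true]
          split_ifs <;> omega
        · obtain ⟨b, hba, hbc, rfl⟩ := hF ρ h
          simp [linL, hca]) hd
    have := htop c hcA
    have hdc : d = c := by
      by_contra hdc
      rcases List.mem_append.1 hρ with h | h <;> have h := mem_rep h
      · simp only [List.mem_singleton] at h; subst h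
        simp [lin2, hca, hda, hdc] at this
      · obtain ⟨b, hba, hbc, rfl⟩ := hF ρ h
        simp only [linL, hca, hda, hdc, if_false, if_true] at this
        split_ifs at this <;> omega
    rwa [← hdc]
  have hlin : ∀ ρ : Fin m → ℕ, Function.Injective ρ →
      (ofRank ρ).orderType Finset.univ = List.replicate m 1 := by
    intro ρ hρ; rw [type_linear ρ _ hρ.injOn]; simp
  have hδ := allBut_le hs (m := m) (by omega)
  set δ := s [m - 1, 1] 0 with hδdef
  have hδ0 : 0 ≤ δ := hs.nn _ _
  have hab : ∀ x, x ≠ c → pts s (allBut c) Finset.univ x = δ := by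
    intro x hx
    rw [pts_allBut s Finset.univ (Finset.mem_univ c) (Finset.mem_univ x) hx]; simp [hδdef]
  have hFa : ∀ ρ ∈ F, pts s ρ Finset.univ a = 0 := by
    intro ρ hρ
    obtain ⟨b, hba, hbc, rfl⟩ := hF ρ hρ
    apply pts_bot hs.lz _ _ (Finset.mem_univ a)
    intro d _
    have := d.2
    simp only [linL]; split_ifs <;> first | omega | simp_all
  have hsca : sc s L Finset.univ a = p * δ + N * Al s m := by
    have : sc s F Finset.univ a = 0 := by
      simp only [F, sc_family]
      apply Finset.sum_eq_zero
      intro x hx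
      exact hFa _ (by simp only [F, List.mem_map, Finset.mem_toList]; exact ⟨x, hx, rfl⟩)
    simp only [L, sc_append, sc_rep, sc_cons, sc_nil, add_zero, this, hab a hca.symm,
      pts_lin_top s (lin2_inj a c) (lin2_first a c), mul_zero]
  have hscc : sc s L Finset.univ c = N * t + N * N * (m - 2 : ℕ) * Al s m := by
    have h1 : sc s F Finset.univ c = (m - 2 : ℕ) * Al s m := by
      simp only [F, sc_family]
      rw [Finset.sum_congr rfl (g := fun _ => Al s m)]
      · simp [hX]
      · intro x hx
        exact pts_lin_top s (linL_inj a c x) (by intro y; simp [linL, hca])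
    have h2 : pts s (lin2 a c) Finset.univ c = t := by
      rw [pts_second s _ _ (Finset.mem_univ a), hlin _ (lin2_inj a c)]
      · simp [lin2, hca]
      · intro e _ he
        simp only [lin2, hca, if_false, if_true] at he ⊢
        split_ifs at he ⊢ <;> omega
    simp only [L, sc_append, sc_rep, sc_cons, sc_nil, add_zero, h1, h2,
      pts_allBut_self hs Finset.univ (Finset.mem_univ c), mul_zero, zero_add]
    push_cast; ring
  have hscb : ∀ b, b ≠ a → b ≠ c → p * δ + N * N * t ≤ sc s L Finset.univ b := by
    intro b hba hbc
    have h1 : t ≤ sc s F Finset.univ b := by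
      simp only [F, sc_family]
      have h2 : pts s (linL a c b) Finset.univ b = t := by
        rw [pts_second s _ _ (Finset.mem_univ c), hlin _ (linL_inj a c b)]
        · simp [linL, hca, hba, hbc]
        · intro e _ he
          simp only [linL, hca, hba, hbc, if_false, if_true] at he ⊢
          split_ifs at he ⊢ <;> omega
      rw [← h2]
      exact Finset.single_le_sum (f := fun x => pts s (linL a c x) Finset.univ b)
        (fun x _ => pts_nonneg hs _ _ _) (by simp [X, hba, hbc])
    have h3 := pts_nonneg hs (lin2 a c) Finset.univ b
    have h4 : (N:ℝ) * N * t ≤ N * N * sc s F Finset.univ b :=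
      mul_le_mul_of_nonneg_left h1 (by positivity)
    have h5 : 0 ≤ (N:ℝ) * pts s (lin2 a c) Finset.univ b := by positivity
    simp only [L, sc_append, sc_rep, sc_cons, sc_nil, add_zero, hab b hbc]
    push_cast
    linarith
  have hp' : (p:ℝ) + N = N * N * (m - 2 : ℕ) + 1 := by exact_mod_cast hp
  have hcW : c ∈ Win s L Finset.univ := by
    refine (Win_step s L _ (by simp; omega) c).2 ⟨a, by simp, ?_, hwin⟩
    intro d _
    by_cases hda : d = a
    · rw [hda]
    by_cases hdc : d = c
    · rw [hdc, hsca, hscc]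
      have : (p:ℝ) * δ ≤ p * Al s m := mul_le_mul_of_nonneg_left hδ (by positivity)
      have h2 : (p:ℝ) * Al s m + N * Al s m = N * N * (m - 2 : ℕ) * Al s m + Al s m := by
        rw [← add_mul, hp']; ring
      linarith
    · refine le_trans ?_ (hscb d hda hdc)
      rw [hsca]
      have : (N:ℝ) * Al s m ≤ N * (N * t) := mul_le_mul_of_nonneg_left hN.le (by positivity)
      linarith
  obtain ⟨ρ, hρ, htop⟩ := hs.majW (rep p [allBut c] ++ rep N [lin2 a c]) (rep (N * N) F)
    Finset.univ (by
      simp only [List.length_append, length_rep, hFlen, List.length_cons, List.length_nil]; omega)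
    a (by simp) (by
      intro ρ hρ e he
      rcases List.mem_append.1 hρ with h | h <;> have h := mem_rep h <;>
        simp only [List.mem_singleton] at h <;> subst h
      · simp [allBut_apply, hca.symm]
      · exact lin2_first a c e) hcW
  have := htop a (by simp)
  rcases List.mem_append.1 hρ with h | h <;> have h := mem_rep h <;>
    simp only [List.mem_singleton] at h <;> subst h
  · simp [allBut_apply, hca.symm] at this
  · simp [lin2, hca] at this

lemma good_linear {s : List ℕ → ℕ → ℝ} (hs : Nice s) {m : ℕ} {ρ : Fin m → ℕ}
    {A : Finset (Fin m)} (h : Set.InjOn ρ A) : Good s ρ A := by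
  by_cases hA : A.card ≤ 2
  · exact good_card_two hs ρ hA
  apply good_of hs
  · intro a _ d _ _
    rw [type_linear ρ A h, Al]
  · intro a ha d hd e he h1 _
    apply le_antisymm _ (pts_nonneg hs _ _ _)
    refine (pts_nontop_le hs ρ A hd h1).trans ?_
    rw [type_linear ρ A h, lin_second hs (by omega)]

/-! ### All order types `(m - 1, 1)` behave alike -/

/-- The linear vote `a ≻ … ≻ b ≻ c`. -/
def linT {m : ℕ} (b c a : Fin m) : Fin m → ℕ :=
  fun x => if x = c then m + 2 else if x = b then m + 1 else if x = a then 0 else x + 1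

lemma linT_inj {m : ℕ} (b c a : Fin m) : Function.Injective (linT b c a) := by
  intro x y h
  have := x.2
  have := y.2
  simp only [linT] at h
  split_ifs at h <;> first | (simp_all; done) | (ext; omega)

/-- A profile in which the candidates other than `b` and `c` are clones. -/
noncomputable def profX {m : ℕ} (b c : Fin m) : List (Fin m → ℕ) :=
  rep (m - 2) [allBut c] ++ rep (m - 2) [lin2 c b] ++
    ((Finset.univ.erase b).erase c).toList.map (linT b c)

/-- In `profX`, candidate `b` goes out first if `s[k-1,1]₁ < α_k`, whereas in case of equality `c`
may go out first, after which `b` wins. -/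
lemma profX_win {s : List ℕ → ℕ → ℝ} (hs : Nice s) {m : ℕ} (hm : 3 ≤ m) {b c y : Fin m}
    (hbc : b ≠ c) (hyb : y ≠ b) (hyc : y ≠ c) (A : Finset (Fin m)) (hb : b ∈ A) (hc : c ∈ A)
    (hy : y ∈ A) : b ∈ Win s (profX b c) A ↔ s [A.card - 1, 1] 0 = Al s A.card := by
  have hA : 3 ≤ A.card := Finset.two_lt_card.2 ⟨b, hb, c, hc, y, hy, hbc, hyb.symm, hyc.symm⟩
  have hα : 0 < Al s A.card := Al_pos hs (by omega)
  set X := (Finset.univ.erase b).erase c with hXdef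
  have hX : X.card = m - 2 := by
    rw [hXdef, Finset.card_erase_of_mem (by simp [hbc.symm]), Finset.card_erase_of_mem (by simp)]
    simp; omega
  have hn : 0 < ((m - 2 : ℕ) : ℝ) := by
    have : 0 < m - 2 := by omega
    exact_mod_cast this
  have hl2 : Good s (lin2 c b) A := good_linear hs (lin2_inj c b).injOn
  have hlT : ∀ z, Good s (linT b c z) A := fun z => good_linear hs (linT_inj b c z).injOn
  have hscc : sc s (profX b c) A c = (m - 2 : ℕ) * Al s A.card := by
    have h1 : ∀ z ∈ X, pts s (linT b c z) A c = 0 := by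
      intro z hz
      apply pts_bot hs.lz _ _ hc
      intro d _
      have := d.2
      simp only [linT]; split_ifs <;> first | omega | simp_all
    have h2 : app (lin2 c b) A c = 1 := app_one (fun d _ => lin2_first c b d) hb (by simp [lin2, hbc])
    simp only [profX, ← hXdef, sc_append, sc_rep, sc_cons, sc_nil, sc_family,
      Finset.sum_eq_zero h1, pts_allBut_self hs A hc, hl2 c hc, h2]
    ring
  have hscb : sc s (profX b c) A b = (m - 2 : ℕ) * s [A.card - 1, 1] 0 := by
    have h1 : ∀ z ∈ X, pts s (linT b c z) A b = 0 := by
      intro z hz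
      have hz' := hz
      simp only [hXdef, Finset.mem_erase] at hz'
      rw [hlT z b hb, app_zero hy, zero_mul]
      have := y.2
      simp only [linT, hyc, hyb, hbc, if_false, if_true]
      split_ifs <;> omega
    have h2 : app (lin2 c b) A b = 0 := app_zero hc (by simp [lin2, hbc])
    simp only [profX, ← hXdef, sc_append, sc_rep, sc_cons, sc_nil, sc_family,
      Finset.sum_eq_zero h1, pts_allBut s A hc hb hbc, hl2 b hb, h2]
    ring
  have hscx : ∀ x ∈ A, x ≠ b → x ≠ c →
      (m - 2 : ℕ) * s [A.card - 1, 1] 0 + Al s A.card ≤ sc s (profX b c) A x := by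
    intro x hx hxb hxc
    have h1 : Al s A.card ≤ ∑ z ∈ X, pts s (linT b c z) A x := by
      have h2 : pts s (linT b c x) A x = Al s A.card := by
        rw [hlT x x hx, app_one (d := b), one_mul]
        · intro d _; simp [linT, hxb, hxc]
        · exact hb
        · simp [linT, hxb, hxc, hbc]
      rw [← h2]
      exact Finset.single_le_sum (f := fun z => pts s (linT b c z) A x)
        (fun z _ => pts_nonneg hs _ _ _) (by simp [hXdef, hxb, hxc])
    have h3 := pts_nonneg hs (lin2 c b) A x
    have h4 : 0 ≤ ((m - 2 : ℕ) : ℝ) * pts s (lin2 c b) A x := by positivity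
    simp only [profX, ← hXdef, sc_append, sc_rep, sc_cons, sc_nil, sc_family,
      pts_allBut s A hc hx hxc, add_zero]
    linarith
  constructor
  · intro h
    by_contra hne
    have hlt : s [A.card - 1, 1] 0 < Al s A.card := lt_of_le_of_ne (allBut_le hs (by omega)) hne
    refine notMem_Win_of_lt s (profX b c) b A hb (by omega) ?_ h
    intro x hx hxb
    by_cases hxc : x = c
    · rw [hxc, hscc, hscb]
      exact mul_lt_mul_of_pos_left hlt hn
    · have := hscx x hx hxb hxc
      rw [hscb]; linarith
  · intro heq
    apply win_elim_dom s (profX b c) c b A hc hb hbc.symm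
    · intro x hx hxc
      rw [hscc]
      by_cases hxb : x = b
      · rw [hxb, hscb, heq]
      · have := hscx x hx hxb hxc
        rw [heq] at this; linarith
    · intro B hBA hcB hbB hB2 x hx hxb
      have hxc : x ≠ c := fun h => hcB (h ▸ hx)
      have hg : ∀ ρ ∈ profX b c, Good s ρ B := by
        intro ρ hρ
        simp only [profX, List.mem_append] at hρ
        rcases hρ with (h | h) | h
        · have h := mem_rep h
          simp only [List.mem_singleton] at h; subst h
          apply good_const hs
          intro u hu v hv
          have h1 : u ≠ c := fun h => hcB (h ▸ hu)
          have h2 : v ≠ c := fun h => hcB (h ▸ hv)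
          simp [allBut_apply, h1, h2]
        · have h := mem_rep h
          simp only [List.mem_singleton] at h; subst h
          exact good_linear hs (lin2_inj c b).injOn
        · simp only [List.mem_map] at h
          obtain ⟨z, _, rfl⟩ := h
          exact good_linear hs (linT_inj b c z).injOn
      rw [sc_eq_ap hg hx, sc_eq_ap hg hbB]
      apply mul_le_mul_of_nonneg_right _ (hs.nn _ _)
      have e1 : app (lin2 c b) B b = 1 := by
        refine app_one ?_ hx (by simp [lin2, hbc, hxb, hxc])
        intro d hd
        have hdc : d ≠ c := fun h => hcB (h ▸ hd)
        simp only [lin2, hbc, hdc, if_false, if_true]; split_ifs <;> omega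
      have e2 : app (lin2 c b) B x = 0 := app_zero hbB (by simp [lin2, hbc, hxb, hxc])
      have e3 : app (allBut c) B x = 0 := by
        apply app_bot; intro d hd
        have hdc : d ≠ c := fun h => hcB (h ▸ hd)
        simp [allBut_apply, hdc]
      have e4 : ∑ z ∈ X, app (linT b c z) B x ≤ (m - 2 : ℕ) := by
        refine (Finset.sum_le_sum fun z _ => app_le_one (linT b c z) B x).trans ?_
        simp [hX]
      have e5 : 0 ≤ ∑ z ∈ X, app (linT b c z) B b :=
        Finset.sum_nonneg fun z _ => app_nonneg _ _ _
      have e6 : 0 ≤ ((m - 2 : ℕ) : ℝ) * app (allBut c) B b :=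
        mul_nonneg hn.le (app_nonneg _ _ _)
      simp only [profX, ← hXdef, ap_append, ap_rep, ap_cons, ap_nil, ap_family, e1, e2, e3, add_zero]
      linarith

/-- The profile `profX` on `m` candidates reduces to three candidates by merging the clones, which
does not affect whether `b` wins. -/
lemma allBut_iff {s : List ℕ → ℕ → ℝ} (hs : Nice s) {m : ℕ} (hm : 3 ≤ m) :
    s [m - 1, 1] 0 = Al s m ↔ s [2, 1] 0 = Al s 3 := by
  let b : Fin m := ⟨0, by omega⟩
  let c : Fin m := ⟨1, by omega⟩
  let y : Fin m := ⟨2, by omega⟩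
  have hbc : b ≠ c := by simp [b, c, Fin.ext_iff]
  have hyb : y ≠ b := by simp [b, y, Fin.ext_iff]
  have hyc : y ≠ c := by simp [c, y, Fin.ext_iff]
  set X := (Finset.univ.erase b).erase c with hXdef
  have hcl : ClonesL (profX b c) X := by
    intro ρ hρ d hd
    have hd : d = b ∨ d = c := by
      simp only [hXdef, Finset.mem_erase, Finset.mem_univ, and_true] at hd; tauto
    have hxX : ∀ x ∈ X, x ≠ b ∧ x ≠ c := by
      intro x hx
      simp only [hXdef, Finset.mem_erase, Finset.mem_univ, and_true] at hx; tauto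
    simp only [profX, List.mem_append] at hρ
    rcases hρ with (h | h) | h
    · have h := mem_rep h
      simp only [List.mem_singleton] at h; subst h
      rcases hd with rfl | rfl
      · exact Or.inr (Or.inl fun x hx => by simp [allBut_apply, hxX x hx, hbc])
      · exact Or.inl fun x hx => by simp [allBut_apply, hxX x hx]
    · have h := mem_rep h
      simp only [List.mem_singleton] at h; subst h
      refine Or.inr (Or.inr fun x hx => ?_)
      obtain ⟨h1, h2⟩ := hxX x hx
      simp only [lin2, h1, h2, if_false]
      split_ifs <;> omega
    · simp only [List.mem_map] at h
      obtain ⟨z, _, rfl⟩ := h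
      refine Or.inl fun x hx => ?_
      obtain ⟨h1, h2⟩ := hxX x hx
      have := x.2
      simp only [linT, h1, h2, if_false]
      split_ifs <;> first | omega | simp_all
  have key := hs.cloneW (profX b c) X hcl (x := y) (c := b) (by simp [hXdef, hyb, hyc])
    (by simp [hXdef])
  have hbase : Finset.univ \ X.erase y = {b, c, y} := by
    ext x
    simp only [hXdef, Finset.mem_sdiff, Finset.mem_erase, Finset.mem_univ, and_true, true_and,
      Finset.mem_insert, Finset.mem_singleton]
    tauto
  have hcard : ({b, c, y} : Finset (Fin m)).card = 3 := by
    rw [Finset.card_eq_three]; exact ⟨b, c, y, hbc, hyb.symm, hyc.symm, rfl⟩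
  rw [hbase, profX_win hs hm hbc hyb hyc _ (by simp) (by simp) (by simp),
    profX_win hs hm hbc hyb hyc _ (by simp) (by simp) (by simp), hcard] at key
  simpa using key

/-! ### The order types `(2, 1)` and `(3, 1)` -/

lemma type_211 (ρ : Fin 4 → ℕ) (h : Finset.univ.image ρ = Finset.range 3)
    (h0 : (Finset.univ.filter fun a => ρ a = 0).card = 2)
    (h1 : (Finset.univ.filter fun a => ρ a = 1).card = 1)
    (h2 : (Finset.univ.filter fun a => ρ a = 2).card = 1) :
    (ofRank ρ).orderType Finset.univ = [2, 1, 1] := by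
  rw [(type_of_range ρ _ 3 h).1]
  simp [List.range_succ, h0, h1, h2]

lemma type_v1 : (ofRank ![0, 0, 1, 2]).orderType (Finset.univ : Finset (Fin 4)) = [2, 1, 1] := by
  apply type_211
  · ext r; simp [Fin.exists_fin_succ]; omega
  all_goals rw [Finset.card_filter, Fin.sum_univ_four]; simp

lemma type_v2 : (ofRank ![0, 2, 1, 0]).orderType (Finset.univ : Finset (Fin 4)) = [2, 1, 1] := by
  apply type_211
  · ext r; simp [Fin.exists_fin_succ]; omega
  all_goals rw [Finset.card_filter, Fin.sum_univ_four]; simp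

lemma type_v3 : (ofRank ![2, 0, 0, 1]).orderType (Finset.univ : Finset (Fin 4)) = [2, 1, 1] := by
  apply type_211
  · ext r; simp [Fin.exists_fin_succ]; omega
  all_goals rw [Finset.card_filter, Fin.sum_univ_four]; simp

lemma type_v4 : (ofRank ![2, 1, 0, 0]).orderType (Finset.univ : Finset (Fin 4)) = [2, 1, 1] := by
  apply type_211
  · ext r; simp [Fin.exists_fin_succ]; omega
  all_goals rw [Finset.card_filter, Fin.sum_univ_four]; simp

lemma subsets_four (B : Finset (Fin 4)) (h0 : (0 : Fin 4) ∉ B) (h2 : (2 : Fin 4) ∈ B)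
    (hB : 2 ≤ B.card) : B = {1, 2} ∨ B = {2, 3} ∨ B = {1, 2, 3} := by
  by_cases h1 : (1 : Fin 4) ∈ B <;> by_cases h3 : (3 : Fin 4) ∈ B
  · right; right; ext x; fin_cases x <;> simp_all
  · left; ext x; fin_cases x <;> simp_all
  · right; left; ext x; fin_cases x <;> simp_all
  · exfalso
    have : B = {2} := by ext x; fin_cases x <;> simp_all
    rw [this] at hB; simp at hB

/-- A linear vote gives `α₄` to its top candidate. -/
lemma pts_four_top {s : List ℕ → ℕ → ℝ} {ρ : Fin 4 → ℕ} (hρ : Function.Injective ρ) {a : Fin 4}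
    (h : ∀ x, ρ a ≤ ρ x) : pts s ρ Finset.univ a = Al s 4 := pts_lin_top s hρ h

lemma inj_four {a b c d : ℕ} (h1 : a ≠ b) (h2 : a ≠ c) (h3 : a ≠ d) (h4 : b ≠ c) (h5 : b ≠ d)
    (h6 : c ≠ d) : Function.Injective (![a, b, c, d] : Fin 4 → ℕ) := by
  intro x y h
  fin_cases x <;> fin_cases y <;> simp_all

lemma injOn_tail {a b c d : ℕ} (h4 : b ≠ c) (h5 : b ≠ d)
    (h6 : c ≠ d) {B : Finset (Fin 4)} (hB : (0 : Fin 4) ∉ B) :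
    Set.InjOn (![a, b, c, d] : Fin 4 → ℕ) B := by
  intro x hx y hy h
  have hx0 : x ≠ 0 := fun h => hB (h ▸ hx)
  have hy0 : y ≠ 0 := fun h => hB (h ▸ hy)
  clear hx hy hB
  fin_cases x <;> fin_cases y <;> simp_all

/-- If `s[2,1]₁ < α₃` and `s[3,1]₁ < α₄`, then `s[2,1,1]₁ ≥ α₄`. Otherwise `N` linear votes
outweigh `N + 1` votes of type `(2, 1, 1)` for large `N`, so that `0`, on top of the bare majority
`L₁`, goes out first. The deficit of the `K` votes disapproving only `2` against the `K` linear votes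
for `2` then makes `2` win, although `2` is on top of no vote in `L₁`. -/
lemma regime_two {s : List ℕ → ℕ → ℝ} (hs : Nice s) (h3 : s [2, 1] 0 < Al s 3)
    (h4 : s [3, 1] 0 < Al s 4) : Al s 4 ≤ s [2, 1, 1] 0 := by
  by_contra hy
  push Not at hy
  obtain ⟨N, hN⟩ := exists_nat_gt (s [2, 1, 1] 0 / (Al s 4 - s [2, 1, 1] 0))
  rw [div_lt_iff₀ (by linarith)] at hN
  obtain ⟨K₁, hK₁⟩ := exists_nat_gt ((2 * N + 1) * Al s 3 / (Al s 3 - s [2, 1] 0))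
  rw [div_lt_iff₀ (by linarith)] at hK₁
  obtain ⟨K₂, hK₂⟩ := exists_nat_gt (2 * (N + 1) * s [2, 1, 1] 0 / (Al s 4 - s [3, 1] 0))
  rw [div_lt_iff₀ (by linarith)] at hK₂
  obtain ⟨K, hK1, hK2⟩ : ∃ K : ℕ, K₁ ≤ K ∧ K₂ ≤ K := ⟨max K₁ K₂, le_max_left _ _, le_max_right _ _⟩
  have hK1' : (2 * N + 1) * Al s 3 ≤ K * (Al s 3 - s [2, 1] 0) := by
    have : (K₁:ℝ) ≤ K := by exact_mod_cast hK1
    nlinarith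
  have hK2' : 2 * (N + 1) * s [2, 1, 1] 0 ≤ K * (Al s 4 - s [3, 1] 0) := by
    have : (K₂:ℝ) ≤ K := by exact_mod_cast hK2
    nlinarith
  set v1 : Fin 4 → ℕ := ![0, 0, 1, 2] with hv1
  set v2 : Fin 4 → ℕ := ![0, 2, 1, 0] with hv2
  set v3 : Fin 4 → ℕ := ![3, 0, 1, 2] with hv3
  set v4 : Fin 4 → ℕ := ![3, 2, 1, 0] with hv4
  set v5 : Fin 4 → ℕ := ![1, 2, 0, 3] with hv5
  set v6 : Fin 4 → ℕ := allBut 2 with hv6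
  let L₁ := rep (N + 1) [v1] ++ rep (N + 1) [v2] ++ rep K [v6]
  let L₂ := rep N [v3] ++ rep N [v4] ++ rep K [v5]
  have hi3 : Function.Injective v3 := by apply inj_four <;> norm_num
  have hi4 : Function.Injective v4 := by apply inj_four <;> norm_num
  have hi5 : Function.Injective v5 := by apply inj_four <;> norm_num
  have hw : (2 : Fin 4) ∈ Win s (L₁ ++ L₂) Finset.univ := by
    apply win_elim_dom s _ 0 2 _ (by simp) (by simp) (by simp)
    · -- scores on all four candidates
      have t1 : ∀ x, (∀ d, v1 x ≤ v1 d) → pts s v1 Finset.univ x = s [2, 1, 1] 0 := fun x hx => by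
        rw [pts_top s _ _ fun d _ => hx d, type_v1]
      have t2 : ∀ x, (∀ d, v2 x ≤ v2 d) → pts s v2 Finset.univ x = s [2, 1, 1] 0 := fun x hx => by
        rw [pts_top s _ _ fun d _ => hx d, type_v2]
      have t6 : ∀ x, x ≠ 2 → pts s v6 Finset.univ x = s [3, 1] 0 := fun x hx => by
        rw [hv6, pts_allBut s Finset.univ (Finset.mem_univ _) (Finset.mem_univ x) hx]; simp
      have a1 := t1 0 (by simp [hv1])
      have a2 := t2 0 (by simp [hv2])
      have a3 : pts s v3 Finset.univ 0 = 0 :=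
        pts_bot hs.lz _ _ (by simp) (by simp [hv3, Fin.forall_fin_succ])
      have a4 : pts s v4 Finset.univ 0 = 0 :=
        pts_bot hs.lz _ _ (by simp) (by simp [hv4, Fin.forall_fin_succ])
      have a5 : pts s v5 Finset.univ 0 = 0 := by
        rw [good_linear hs hi5.injOn 0 (by simp), app_zero (d := 2) (by simp) (by simp [hv5]),
          zero_mul]
      have n1 := pts_nonneg hs v1 Finset.univ
      have n2 := pts_nonneg hs v2 Finset.univ
      have n3 := pts_nonneg hs v3 Finset.univ
      have n4 := pts_nonneg hs v4 Finset.univ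
      have n5 := pts_nonneg hs v5 Finset.univ
      have n6 := pts_nonneg hs v6 Finset.univ
      intro x _ hx
      have hNr : (0:ℝ) ≤ N := by positivity
      have hKr : (0:ℝ) ≤ K := by positivity
      simp only [L₁, L₂, sc_append, sc_rep, sc_cons, sc_nil, add_zero, a1, a2, a3, a4, a5,
        t6 0 (by simp)]
      push_cast
      fin_cases x
      · simp at hx
      · change _ ≤ ((N:ℝ) + 1) * pts s v1 Finset.univ 1 + (N + 1) * pts s v2 Finset.univ 1 +
          K * pts s v6 Finset.univ 1 + (N * pts s v3 Finset.univ 1 + N * pts s v4 Finset.univ 1 +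
            K * pts s v5 Finset.univ 1)
        rw [t1 1 (by simp [hv1]), t6 1 (by simp), pts_four_top hi3 (by simp [hv3])]
        nlinarith [mul_nonneg hNr (n2 1), n2 1, mul_nonneg hNr (n4 1), mul_nonneg hKr (n5 1)]
      · change _ ≤ ((N:ℝ) + 1) * pts s v1 Finset.univ 2 + (N + 1) * pts s v2 Finset.univ 2 +
          K * pts s v6 Finset.univ 2 + (N * pts s v3 Finset.univ 2 + N * pts s v4 Finset.univ 2 +
            K * pts s v5 Finset.univ 2)
        rw [pts_four_top hi5 (by simp [hv5])]
        nlinarith [mul_nonneg hNr (n2 2), n2 2, mul_nonneg hNr (n1 2), n1 2, mul_nonneg hNr (n4 2),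
          mul_nonneg hNr (n3 2), mul_nonneg hKr (n6 2)]
      · change _ ≤ ((N:ℝ) + 1) * pts s v1 Finset.univ 3 + (N + 1) * pts s v2 Finset.univ 3 +
          K * pts s v6 Finset.univ 3 + (N * pts s v3 Finset.univ 3 + N * pts s v4 Finset.univ 3 +
            K * pts s v5 Finset.univ 3)
        rw [t2 3 (by simp [hv2]), t6 3 (by simp),
          pts_four_top hi4 (by simp [hv4])]
        nlinarith [mul_nonneg hNr (n1 3), n1 3, mul_nonneg hNr (n3 3), mul_nonneg hKr (n5 3)]
    · -- domination of `2` after the elimination of `0`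
      intro B _ h0 h2 hB x hx hx2
      have g1 : Good s v1 B := good_linear hs (by apply injOn_tail _ _ _ h0 <;> norm_num)
      have g2 : Good s v2 B := good_linear hs (by apply injOn_tail _ _ _ h0 <;> norm_num)
      have g3 : Good s v3 B := good_linear hs hi3.injOn
      have g4 : Good s v4 B := good_linear hs hi4.injOn
      have g5 : Good s v5 B := good_linear hs hi5.injOn
      simp only [L₁, L₂, sc_append, sc_rep, sc_cons, sc_nil, add_zero, g1 x hx, g2 x hx, g3 x hx,
        g4 x hx, g5 x hx, g1 2 h2, g2 2 h2, g3 2 h2, g4 2 h2, g5 2 h2]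
      have e6 : pts s v6 B 2 = 0 := pts_allBut_self hs B h2
      have e6' : pts s v6 B x = s [B.card - 1, 1] 0 := pts_allBut s B h2 hx hx2
      rw [e6, e6']
      push_cast
      have h11 : s [1, 1] 0 = Al s 2 := rfl
      rcases subsets_four B h0 h2 hB with rfl | rfl | rfl
      · have : x = 1 := by simp at hx; tauto
        subst this
        simp [app, hv1, hv2, hv3, hv4, hv5, h11]
        nlinarith
      · have : x = 3 := by simp at hx; tauto
        subst this
        simp [app, hv1, hv2, hv3, hv4, hv5, h11]
        nlinarith
      · have : x = 1 ∨ x = 3 := by simp at hx; tauto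
        rcases this with rfl | rfl
        · simp [app, hv1, hv2, hv3, hv4, hv5]
          nlinarith
        · simp [app, hv1, hv2, hv3, hv4, hv5]
          nlinarith
  obtain ⟨ρ, hρ, htop⟩ := hs.majW L₁ L₂ Finset.univ (by simp [L₁, L₂]; omega) 0 (by simp) (by
    intro ρ hρ d _
    simp only [L₁, List.mem_append] at hρ
    rcases hρ with (h | h) | h <;> have h := mem_rep h <;> simp only [List.mem_singleton] at h <;>
      subst h <;> simp [hv1, hv2, hv6, allBut_apply]) hw
  have := htop 0 (by simp)
  simp only [L₁, List.mem_append] at hρ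
  rcases hρ with (h | h) | h <;> have h := mem_rep h <;> simp only [List.mem_singleton] at h <;>
    subst h <;> simp [hv1, hv2, hv6, allBut_apply] at this

/-- If `s[2,1]₁ ≤ α₃` and `s[3,1]₁ < α₄`, then `s[2,1,1]₁ < α₄`. Otherwise the two votes of type
`(2, 1, 1)` in `L₂` let each of `1` and `3` have at least the score of `0`, and the `N` linear votes
for `2` outweigh the `N + 2` votes disapproving only `2`. So `0`, on top of the bare majority `L₁`,
goes out first, and then `2` wins, although `2` is on top of no vote in `L₁`. -/
lemma regime_one {s : List ℕ → ℕ → ℝ} (hs : Nice s) (h3 : s [2, 1] 0 ≤ Al s 3)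
    (h4 : s [3, 1] 0 < Al s 4) : s [2, 1, 1] 0 < Al s 4 := by
  by_contra hy
  push Not at hy
  obtain ⟨N, hN⟩ := exists_nat_gt (Al s 4 / (Al s 4 - s [3, 1] 0))
  rw [div_lt_iff₀ (by linarith)] at hN
  set u1 : Fin 4 → ℕ := ![0, 2, 1, 3] with hu1
  set u2 : Fin 4 → ℕ := ![2, 0, 0, 1] with hu2
  set u3 : Fin 4 → ℕ := ![2, 1, 0, 0] with hu3
  set u4 : Fin 4 → ℕ := ![1, 2, 0, 3] with hu4
  set u5 : Fin 4 → ℕ := allBut 2 with hu5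
  let L₁ := [u1] ++ rep (N + 2) [u5]
  let L₂ := [u2] ++ [u3] ++ rep N [u4]
  have hi1 : Function.Injective u1 := by apply inj_four <;> norm_num
  have hi4 : Function.Injective u4 := by apply inj_four <;> norm_num
  have hNr : (0:ℝ) ≤ N := by positivity
  have hw : (2 : Fin 4) ∈ Win s (L₁ ++ L₂) Finset.univ := by
    apply win_elim_dom s _ 0 2 _ (by simp) (by simp) (by simp)
    · have t2 : ∀ x, (∀ d, u2 x ≤ u2 d) → pts s u2 Finset.univ x = s [2, 1, 1] 0 := fun x hx => by
        rw [pts_top s _ _ fun d _ => hx d, type_v3]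
      have t3 : ∀ x, (∀ d, u3 x ≤ u3 d) → pts s u3 Finset.univ x = s [2, 1, 1] 0 := fun x hx => by
        rw [pts_top s _ _ fun d _ => hx d, type_v4]
      have t5 : ∀ x, x ≠ 2 → pts s u5 Finset.univ x = s [3, 1] 0 := fun x hx => by
        rw [hu5, pts_allBut s Finset.univ (Finset.mem_univ _) (Finset.mem_univ x) hx]; simp
      have a1 : pts s u1 Finset.univ 0 = Al s 4 := pts_four_top hi1 (by simp [hu1])
      have a2 : pts s u2 Finset.univ 0 = 0 :=
        pts_bot hs.lz _ _ (by simp) (by simp [hu2, Fin.forall_fin_succ])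
      have a3 : pts s u3 Finset.univ 0 = 0 :=
        pts_bot hs.lz _ _ (by simp) (by simp [hu3, Fin.forall_fin_succ])
      have a4 : pts s u4 Finset.univ 0 = 0 := by
        rw [good_linear hs hi4.injOn 0 (by simp), app_zero (d := 2) (by simp) (by simp [hu4]),
          zero_mul]
      have n1 := pts_nonneg hs u1 Finset.univ
      have n2 := pts_nonneg hs u2 Finset.univ
      have n3 := pts_nonneg hs u3 Finset.univ
      have n4 := pts_nonneg hs u4 Finset.univ
      have n5 := pts_nonneg hs u5 Finset.univ
      intro x _ hx
      simp only [L₁, L₂, sc_append, sc_rep, sc_cons, sc_nil, add_zero, a1, a2, a3, a4,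
        t5 0 (by simp)]
      push_cast
      fin_cases x
      · simp at hx
      · change _ ≤ pts s u1 Finset.univ 1 + ((N:ℝ) + 2) * pts s u5 Finset.univ 1 +
          (pts s u2 Finset.univ 1 + pts s u3 Finset.univ 1 + N * pts s u4 Finset.univ 1)
        rw [t5 1 (by simp), t2 1 (by simp [hu2])]
        nlinarith [n1 1, n3 1, mul_nonneg hNr (n4 1)]
      · change _ ≤ pts s u1 Finset.univ 2 + ((N:ℝ) + 2) * pts s u5 Finset.univ 2 +
          (pts s u2 Finset.univ 2 + pts s u3 Finset.univ 2 + N * pts s u4 Finset.univ 2)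
        rw [t2 2 (by simp [hu2]), t3 2 (by simp [hu3]), pts_four_top hi4 (by simp [hu4])]
        nlinarith [n1 2, n5 2, mul_nonneg hNr (n5 2)]
      · change _ ≤ pts s u1 Finset.univ 3 + ((N:ℝ) + 2) * pts s u5 Finset.univ 3 +
          (pts s u2 Finset.univ 3 + pts s u3 Finset.univ 3 + N * pts s u4 Finset.univ 3)
        rw [t5 3 (by simp), t3 3 (by simp [hu3])]
        nlinarith [n1 3, n2 3, mul_nonneg hNr (n4 3)]
    · intro B _ h0 h2 hB x hx hx2
      have g1 : Good s u1 B := good_linear hs hi1.injOn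
      have g4 : Good s u4 B := good_linear hs hi4.injOn
      simp only [L₁, L₂, sc_append, sc_rep, sc_cons, sc_nil, add_zero, g1 x hx, g4 x hx,
        g1 2 h2, g4 2 h2]
      have e6 : pts s u5 B 2 = 0 := pts_allBut_self hs B h2
      have e6' : pts s u5 B x = s [B.card - 1, 1] 0 := pts_allBut s B h2 hx hx2
      rw [e6, e6']
      push_cast
      have h11 : s [1, 1] 0 = Al s 2 := rfl
      have hn2 : 0 ≤ Al s 2 := hs.nn _ _
      rcases subsets_four B h0 h2 hB with rfl | rfl | rfl
      · have : x = 1 := by simp at hx; tauto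
        subst this
        have g2 : Good s u2 {1, 2} := good_card_two hs _ (by simp)
        have g3 : Good s u3 {1, 2} := good_card_two hs _ (by simp)
        rw [g2 1 hx, g3 1 hx, g2 2 h2, g3 2 h2]
        simp [app, hu1, hu2, hu3, hu4, h11]
        nlinarith
      · have : x = 3 := by simp at hx; tauto
        subst this
        have g2 : Good s u2 {2, 3} := good_card_two hs _ (by simp)
        have g3 : Good s u3 {2, 3} := good_card_two hs _ (by simp)
        rw [g2 3 hx, g3 3 hx, g2 2 h2, g3 2 h2]
        simp [app, hu1, hu2, hu3, hu4, h11]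
        nlinarith
      · -- on `{1, 2, 3}` the votes `u2`, `u3` have order type `(2, 1)`
        have c2 : ∀ y ∈ ({1, 2, 3} : Finset (Fin 4)),
            pts s u2 {1, 2, 3} y = pts s (allBut 3) {1, 2, 3} y := fun y hy =>
          pts_congr s _ _ _ (by simp [hu2, allBut_apply]) hy
        have c3 : ∀ y ∈ ({1, 2, 3} : Finset (Fin 4)),
            pts s u3 {1, 2, 3} y = pts s (allBut 1) {1, 2, 3} y := fun y hy =>
          pts_congr s _ _ _ (by simp [hu3, allBut_apply]) hy
        rw [c2 x hx, c3 x hx, c2 2 h2, c3 2 h2,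
          pts_allBut s {1, 2, 3} (c := 3) (b := 2) (by simp) (by simp) (by simp),
          pts_allBut s {1, 2, 3} (c := 1) (b := 2) (by simp) (by simp) (by simp)]
        have : x = 1 ∨ x = 3 := by simp at hx; tauto
        rcases this with rfl | rfl
        · rw [pts_allBut s {1, 2, 3} (c := 3) (b := 1) (by simp) (by simp) (by simp),
            pts_allBut_self hs {1, 2, 3} (c := 1) (by simp)]
          simp [app, hu1, hu4]
          nlinarith
        · rw [pts_allBut s {1, 2, 3} (c := 1) (b := 3) (by simp) (by simp) (by simp),
            pts_allBut_self hs {1, 2, 3} (c := 3) (by simp)]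
          simp [app, hu1, hu4]
          nlinarith
  obtain ⟨ρ, hρ, htop⟩ := hs.majW L₁ L₂ Finset.univ (by simp [L₁, L₂]) 0 (by simp) (by
    intro ρ hρ d _
    simp only [L₁, List.mem_append] at hρ
    rcases hρ with h | h
    · simp only [List.mem_singleton] at h; subst h; simp [hu1]
    · have h := mem_rep h
      simp only [List.mem_singleton] at h; subst h; simp [hu5, allBut_apply]) hw
  have := htop 0 (by simp)
  simp only [L₁, List.mem_append] at hρ
  rcases hρ with h | h
  · simp only [List.mem_singleton] at h; subst h; simp [hu1] at this
  · have h := mem_rep h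
    simp only [List.mem_singleton] at h; subst h; simp [hu5, allBut_apply] at this

/-- If `s[2,1]₁ < α₃`, then `s[3,1]₁ < α₄`, and the two preceding bounds on `s[2,1,1]₁` conflict. -/
lemma allBut_eq {s : List ℕ → ℕ → ℝ} (hs : Nice s) {m : ℕ} (hm : 2 ≤ m) :
    s [m - 1, 1] 0 = Al s m := by
  have h34 : s [2, 1] 0 = Al s 3 := by
    by_contra hne
    have hne4 : s [3, 1] 0 ≠ Al s 4 := fun h => hne ((allBut_iff hs (m := 4) (by omega)).1 h)
    have h3 : s [2, 1] 0 < Al s 3 := lt_of_le_of_ne (allBut_le hs (m := 3) (by omega)) hne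
    have h4 : s [3, 1] 0 < Al s 4 := lt_of_le_of_ne (allBut_le hs (m := 4) (by omega)) hne4
    exact absurd (regime_two hs h3 h4) (not_le.2 (regime_one hs h3.le h4))
  rcases Nat.lt_or_ge m 3 with h | h
  · obtain rfl : m = 2 := by omega
    rfl
  · exact (allBut_iff hs h).2 h34

lemma good_allBut {s : List ℕ → ℕ → ℝ} (hs : Nice s) {m : ℕ} (c : Fin m) (A : Finset (Fin m)) :
    Good s (allBut c) A := by
  by_cases hc : c ∈ A
  · apply good_of hs
    · intro a ha d hd hlt
      have hac : a ≠ c := by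
        rintro rfl; simp only [allBut_apply] at hlt; split_ifs at hlt <;> omega
      rw [type_allBut A hc ha hac, allBut_eq hs]
      exact Finset.one_lt_card.2 ⟨a, ha, c, hc, hac⟩
    · intro a ha d hd e he h1 h2
      simp only [allBut_apply] at h1 h2
      split_ifs at h1 h2 <;> omega
  · intro a ha
    rw [pts_allBut_out hs A hc ha, app_bot, zero_mul]
    intro d hd
    have : d ≠ c := fun h => hc (h ▸ hd)
    simp [allBut_apply, this]

/-! ### Bounds for the first score value of further order types -/

/-- Lower bound for the first score value: if it were smaller than `α_m`, then `N` votes `w`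
and `N` votes `a ≻ c ≻ …` would not save `a` from elimination by `2N - 1` votes disapproving only
`a`, and then `c`, which is on top of none of the votes of the first two groups, would win. -/
lemma lower_bound {s : List ℕ → ℕ → ℝ} (hs : Nice s) {m : ℕ} (w : Fin m → ℕ) {a c : Fin m}
    (ha : ∀ d, w a ≤ w d) (hc : w a < w c) (hg : ∀ B ≠ Finset.univ, Good s w B) :
    Al s m ≤ s ((ofRank w).orderType Finset.univ) 0 := by
  by_contra hcon
  push Not at hcon
  set y := s ((ofRank w).orderType Finset.univ) 0 with hy
  have hca : c ≠ a := by rintro rfl; omega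
  obtain ⟨n, hn⟩ := exists_nat_gt (Al s m / (Al s m - y))
  rw [div_lt_iff₀ (by linarith)] at hn
  let L₁ := rep (n + 1) [w] ++ rep (n + 1) [lin2 a c]
  let L₂ := rep (2 * n + 1) [allBut a]
  have hw : c ∈ Win s (L₁ ++ L₂) Finset.univ := by
    apply win_elim_dom s _ a c _ (by simp) (by simp) hca.symm
    · intro b _ hb
      have h1 : pts s w Finset.univ a = y := pts_top s w _ fun d _ => ha d
      have h2 : pts s (allBut a) Finset.univ b = Al s m := by
        have hm : 2 ≤ m := by have := a.2; have := b.2; have := Fin.val_ne_of_ne hb; omega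
        rw [pts_allBut s Finset.univ (by simp) (by simp) hb]
        simpa using allBut_eq hs hm
      have h3 := pts_nonneg hs w Finset.univ b
      have h4 := pts_nonneg hs (lin2 a c) Finset.univ b
      have h5 : 0 ≤ ((n:ℝ) + 1) * pts s w Finset.univ b := by positivity
      have h6 : 0 ≤ ((n:ℝ) + 1) * pts s (lin2 a c) Finset.univ b := by positivity
      simp only [L₁, L₂, sc_append, sc_rep, sc_cons, sc_nil, add_zero, h1, h2,
        pts_lin_top s (lin2_inj a c) (lin2_first a c),
        pts_allBut_self hs Finset.univ (Finset.mem_univ a)]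
      push_cast
      nlinarith
    · intro B _ haB hcB _ x hx hxc
      have hxa : x ≠ a := fun h => haB (h ▸ hx)
      have g : ∀ ρ ∈ L₁ ++ L₂, Good s ρ B := by
        intro ρ hρ
        simp only [L₁, L₂, List.mem_append] at hρ
        rcases hρ with (h | h) | h <;> have h := mem_rep h <;>
          simp only [List.mem_singleton] at h <;> subst h
        · exact hg B (by rintro rfl; simp at haB)
        · exact good_linear hs (lin2_inj a c).injOn
        · exact good_allBut hs a B
      rw [sc_eq_ap g hx, sc_eq_ap g hcB]
      apply mul_le_mul_of_nonneg_right _ (hs.nn _ _)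
      have e1 : app (lin2 a c) B c = 1 := by
        refine app_one ?_ hx (by simp [lin2, hca, hxc, hxa])
        intro d hd
        have hda : d ≠ a := fun h => haB (h ▸ hd)
        simp only [lin2, hca, hda, if_false, if_true]; split_ifs <;> omega
      have e2 : app (lin2 a c) B x = 0 := app_zero hcB (by simp [lin2, hca, hxc, hxa])
      have e3 : app (allBut a) B x = 0 := by
        apply app_bot; intro d hd
        have hda : d ≠ a := fun h => haB (h ▸ hd)
        simp [allBut_apply, hda]
      have e4 := app_le_one w B x
      have e5 := app_nonneg w B c
      have e6 := app_nonneg (allBut a) B c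
      have e7 : 0 ≤ ((n:ℝ) + 1) * app w B c := by positivity
      have e8 : 0 ≤ (2 * (n:ℝ) + 1) * app (allBut a) B c := by positivity
      have e9 : ((n:ℝ) + 1) * app w B x ≤ (n + 1) * 1 :=
        mul_le_mul_of_nonneg_left e4 (by positivity)
      simp only [L₁, L₂, ap_append, ap_rep, ap_cons, ap_nil, e1, e2, e3]
      push_cast
      linarith
  obtain ⟨ρ, hρ, htop⟩ := hs.majW L₁ L₂ Finset.univ
    (by simp only [L₁, L₂, List.length_append, length_rep, List.length_cons, List.length_nil]; omega)
    a (by simp) (by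
      intro ρ hρ d _
      simp only [L₁, List.mem_append] at hρ
      rcases hρ with h | h <;> have h := mem_rep h <;> simp only [List.mem_singleton] at h <;>
        subst h
      · exact ha d
      · exact lin2_first a c d) hw
  have := htop a (by simp)
  simp only [L₁, List.mem_append] at hρ
  rcases hρ with h | h <;> have h := mem_rep h <;> simp only [List.mem_singleton] at h <;>
    subst h
  · omega
  · simp [lin2, hca] at this

/-- The linear vote with `c` first, then `a`, the rest of `T`, and finally the others. -/
noncomputable def linC {m : ℕ} (T : Finset (Fin m)) (a c : Fin m) : Fin m → ℕ :=
  fun x => if x = c then 0 else if x = a then 1 else if x ∈ T then x + 2 else m + x + 2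

lemma linC_inj {m : ℕ} (T : Finset (Fin m)) (a c : Fin m) : Function.Injective (linC T a c) := by
  intro x y h
  have := x.2
  have := y.2
  simp only [linC] at h
  split_ifs at h <;> first | (simp_all; done) | (ext; omega)

/-- Upper bound for the first score value of a vote whose top class `T` has at least two members.
The members of `T` are clones of `a` in a profile of `N` votes `w` and `N + 1` votes
`c ≻ a ≻ …` for each `c ∉ T`. With only `a` left of `T`, candidate `a` goes out first; but if the
first score value exceeded `α_m`, then with all of `T` present a bottom candidate `d` could go out
first, after which `a` wins. -/
lemma upper_bound {s : List ℕ → ℕ → ℝ} (hs : Nice s) {m : ℕ} (w : Fin m → ℕ) {a a' d : Fin m}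
    (ha : ∀ x, w a ≤ w x) (ha' : w a' = w a) (haa : a' ≠ a) (hd : ∀ x, w x ≤ w d)
    (had : w a < w d) (hg : ∀ B ≠ Finset.univ, Good s w B) :
    s ((ofRank w).orderType Finset.univ) 0 ≤ Al s m := by
  by_contra hcon
  push Not at hcon
  set y := s ((ofRank w).orderType Finset.univ) 0 with hy
  obtain ⟨N, hN⟩ := exists_nat_gt (Al s m / (y - Al s m))
  rw [div_lt_iff₀ (by linarith)] at hN
  have hNr : (0:ℝ) ≤ N := by positivity
  set T : Finset (Fin m) := Finset.univ.filter fun x => w x = w a with hT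
  have hmT : ∀ x, x ∈ T ↔ w x = w a := by intro x; simp [hT]
  set X : Finset (Fin m) := Finset.univ \ T with hX
  have hmX : ∀ x, x ∈ X ↔ w x ≠ w a := by intro x; simp [hX, hmT]
  have hdX : d ∈ X := (hmX d).2 (by omega)
  let L := rep N [w] ++ rep (N + 1) (X.toList.map (linC T a))
  have hda : d ≠ a := by rintro rfl; omega
  have hmem : ∀ ρ ∈ L, ρ = w ∨ ∃ c ∈ X, ρ = linC T a c := by
    intro ρ hρ
    simp only [L, List.mem_append] at hρ
    rcases hρ with h | h <;> have h := mem_rep h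
    · left; simpa using h
    · right
      simp only [List.mem_map, Finset.mem_toList] at h
      obtain ⟨c, hc, rfl⟩ := h
      exact ⟨c, hc, rfl⟩
  have hcl : ClonesL L T := by
    intro ρ hρ e he
    have he' : w e ≠ w a := fun h => he ((hmT e).2 h)
    have hea : e ≠ a := by rintro rfl; exact he' rfl
    rcases hmem ρ hρ with rfl | ⟨c, hc, rfl⟩
    · left; intro x hx
      have h1 := (hmT x).1 hx
      have := ha e
      omega
    · have hcT : c ∉ T := by rw [hmT]; exact (hmX c).1 hc
      by_cases hec : e = c
      · subst hec
        right; right; intro x hx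
        have : x ≠ e := by rintro rfl; exact he hx
        simp only [linC, this, if_true, if_false]; split_ifs <;> omega
      · left; intro x hx
        have h1 : x ≠ c := by rintro rfl; exact hcT hx
        have := x.2
        have := e.2
        simp only [linC, h1, hx, hec, hea, he, if_true, if_false]
        split_ifs <;> omega
  have hga : ∀ B ≠ Finset.univ, ∀ ρ ∈ L, Good s ρ B := by
    intro B hB ρ hρ
    rcases hmem ρ hρ with rfl | ⟨c, hc, rfl⟩
    · exact hg B hB
    · exact good_linear hs (linC_inj T a c).injOn
  have haX : ∀ c ∈ X, a ≠ c := by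
    rintro c hc rfl; exact (hmX a).1 hc rfl
  -- a vote `linC T a c` gives nothing to `x ∉ {a, c}`, as long as `a` is present
  have hzero : ∀ B : Finset (Fin m), a ∈ B → ∀ c ∈ X, ∀ x, x ≠ a → x ≠ c →
      app (linC T a c) B x = 0 := by
    intro B haB c hc x hxa hxc
    refine app_zero haB ?_
    simp only [linC, hxa, hxc, haX c hc, if_true, if_false]
    split_ifs <;> omega
  have hself : ∀ B : Finset (Fin m), a ∈ B → ∀ c ∈ X, app (linC T a c) B c = 1 := by
    intro B haB c hc
    refine app_one ?_ haB ?_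
    · intro e _; simp [linC]
    · simp [linC, haX c hc]
  have hwin : a ∈ Win s L Finset.univ := by
    apply win_elim_dom s L d a _ (by simp) (by simp) hda
    · intro b _ hb
      have hl : ∀ x, sc s (X.toList.map (linC T a)) Finset.univ x =
          ∑ c ∈ X, app (linC T a c) Finset.univ x * Al s m := by
        intro x
        rw [sc_family]
        apply Finset.sum_congr rfl
        intro c _
        have := good_linear hs (linC_inj T a c).injOn (A := Finset.univ) x (by simp)
        simpa using this
      have h1 : sc s L Finset.univ d = (N + 1) * Al s m := by
        have h2 : pts s w Finset.univ d = 0 := pts_bot hs.lz _ _ (by simp) fun x _ => hd x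
        simp only [L, sc_append, sc_rep, sc_cons, sc_nil, hl, h2]
        rw [Finset.sum_eq_single d]
        · rw [hself _ (by simp) d hdX]; push_cast; ring
        · intro c hc hcd
          rw [hzero _ (by simp) c hc d hda hcd.symm, zero_mul]
        · intro h; exact absurd hdX h
      have h2 : 0 ≤ ∑ c ∈ X, app (linC T a c) Finset.univ b * Al s m :=
        Finset.sum_nonneg fun c _ => mul_nonneg (app_nonneg _ _ _) (hs.nn _ _)
      rw [h1]
      simp only [L, sc_append, sc_rep, sc_cons, sc_nil, hl, add_zero]
      push_cast
      by_cases hbT : b ∈ T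
      · have h3 : pts s w Finset.univ b = y :=
          pts_top s w _ fun x _ => by rw [(hmT b).1 hbT]; exact ha x
        rw [h3]
        nlinarith [mul_nonneg hNr h2]
      · have hbX : b ∈ X := by simp [hX, hbT]
        have h3 : Al s m ≤ ∑ c ∈ X, app (linC T a c) Finset.univ b * Al s m := by
          have := Finset.single_le_sum (f := fun c => app (linC T a c) Finset.univ b * Al s m)
            (fun c _ => mul_nonneg (app_nonneg _ _ _) (hs.nn _ _)) hbX
          simpa [hself Finset.univ (by simp) b hbX] using this
        have h4 := mul_nonneg hNr (pts_nonneg hs w Finset.univ b)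
        nlinarith
    · intro B _ hdB haB _ x hx hxa
      have g := hga B (by rintro rfl; simp at hdB)
      rw [sc_eq_ap g hx, sc_eq_ap g haB]
      apply mul_le_mul_of_nonneg_right _ (hs.nn _ _)
      simp only [L, ap_append, ap_rep, ap_cons, ap_nil, ap_family, add_zero]
      by_cases hxT : x ∈ T
      · have e1 : app w B x = app w B a := by
          simp only [app, (hmT x).1 hxT]
        have e2 : ∑ c ∈ X, app (linC T a c) B x = 0 := by
          apply Finset.sum_eq_zero
          intro c hc
          exact hzero B haB c hc x hxa (by rintro rfl; exact (hmX x).1 hc ((hmT x).1 hxT))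
        have e3 : 0 ≤ ∑ c ∈ X, app (linC T a c) B a := Finset.sum_nonneg fun c _ => app_nonneg _ _ _
        rw [e1, e2]
        push_cast
        nlinarith [mul_nonneg hNr e3]
      · have hxw : w a < w x := lt_of_le_of_ne (ha x) fun h => hxT ((hmT x).2 h.symm)
        have hxX : x ∈ X := by simp [hX, hxT]
        have e1 : app w B x = 0 := app_zero haB hxw
        have e2 : app w B a = 1 := app_one (fun e _ => ha e) hx hxw
        have e3 : ∑ c ∈ X, app (linC T a c) B x = 1 := by
          rw [Finset.sum_eq_single x, hself B haB x hxX]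
          · intro c hc hcx; exact hzero B haB c hc x hxa hcx.symm
          · intro h; exact absurd hxX h
        have e4 : 1 ≤ ∑ c ∈ X, app (linC T a c) B a := by
          have h5 : app (linC T a d) B a = 1 := by
            refine app_one ?_ hx ?_
            · intro e he
              have : e ≠ d := fun h => hdB (h ▸ he)
              simp only [linC, hda.symm, this, if_true, if_false]; split_ifs <;> omega
            · have : x ≠ d := fun h => hdB (h ▸ hx)
              simp only [linC, hda.symm, this, hxa, if_true, if_false]; split_ifs <;> omega
          rw [← h5]
          exact Finset.single_le_sum (f := fun c => app (linC T a c) B a)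
            (fun c _ => app_nonneg _ _ _) hdX
        rw [e1, e2, e3]
        push_cast
        nlinarith
  have hbase := hs.cloneX L T hcl ((hmT a).2 rfl) hwin
  set A₀ := Finset.univ \ T.erase a with hA₀
  have haA : a ∈ A₀ := by simp [hA₀]
  have hdA : d ∈ A₀ := by simp [hA₀, hmT, had.ne']
  have hA₀ne : A₀ ≠ Finset.univ := by
    intro h
    have : a' ∈ A₀ := by rw [h]; simp
    simp [hA₀, hmT, ha', haa] at this
  have hA2 : 2 ≤ A₀.card := Finset.one_lt_card.2 ⟨a, haA, d, hdA, hda.symm⟩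
  refine notMem_Win_of_lt s L a A₀ haA hA2 ?_ hbase
  intro x hx hxa
  have hxT : x ∉ T := by
    intro h
    simp [hA₀, hxa, h] at hx
  have hxX : x ∈ X := by simp [hX, hxT]
  have hxw : w a < w x := lt_of_le_of_ne (ha x) fun h => hxT ((hmT x).2 h.symm)
  rw [sc_eq_ap (hga A₀ hA₀ne) haA, sc_eq_ap (hga A₀ hA₀ne) hx]
  apply mul_lt_mul_of_pos_right _ (Al_pos hs hA2)
  have e1 : app w A₀ x = 0 := app_zero haA hxw
  have e2 : app w A₀ a = 1 := app_one (fun e _ => ha e) hdA had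
  have e3 : ∑ c ∈ X, app (linC T a c) A₀ x = 1 := by
    rw [Finset.sum_eq_single x, hself A₀ haA x hxX]
    · intro c hc hcx; exact hzero A₀ haA c hc x hxa hcx.symm
    · intro h; exact absurd hxX h
  have e4 : ∑ c ∈ X, app (linC T a c) A₀ a = 0 := by
    apply Finset.sum_eq_zero
    intro c hc
    refine app_zero (d := c) ?_ ?_
    · have := (hmX c).1 hc
      simp [hA₀, hmT, this]
    · simp [linC, haX c hc]
  simp only [L, ap_append, ap_rep, ap_cons, ap_nil, ap_family, e1, e2, e3, e4]
  push_cast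
  linarith

/-- Upper bound for the order type `(1, m - 1)`. If the first score value exceeded `α_m`, then `K`
votes approving only `c` would outweigh `K + 1` linear votes, so that `a`, on top of a bare majority,
goes out first; then `c`, on top of no vote of that majority, wins. -/
lemma upper_bound_one {s : List ℕ → ℕ → ℝ} (hs : Nice s) {m : ℕ} (hm : 2 ≤ m) :
    s [1, m - 1] 0 ≤ Al s m := by
  by_contra hcon
  push Not at hcon
  obtain ⟨K, hK⟩ := exists_nat_gt (Al s m / (s [1, m - 1] 0 - Al s m))
  rw [div_lt_iff₀ (by linarith)] at hK
  let a : Fin m := ⟨0, by omega⟩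
  let c : Fin m := ⟨1, by omega⟩
  have hca : c ≠ a := by simp [a, c, Fin.ext_iff]
  let L₁ := rep (K + 1) [allBut c] ++ rep (K + 1) [lin2 a c]
  let L₂ := rep (K + 1) [allBut a] ++ rep K [dich {c}]
  have hdx : ∀ B : Finset (Fin m), ∀ x ∈ B, x ≠ c → pts s (dich {c}) B x = 0 := by
    intro B x hx hxc
    apply pts_bot hs.lz _ _ hx
    intro d _
    simp only [dich, Finset.mem_singleton, hxc, if_false]; split_ifs <;> omega
  have hab : ∀ e x : Fin m, x ≠ e → pts s (allBut e) Finset.univ x = Al s m := by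
    intro e x hxe
    rw [pts_allBut s Finset.univ (by simp) (by simp) hxe]
    simpa using allBut_eq hs hm
  have hw : c ∈ Win s (L₁ ++ L₂) Finset.univ := by
    apply win_elim_dom s _ a c _ (by simp) (by simp) hca.symm
    · intro b _ hb
      have hsa : sc s (L₁ ++ L₂) Finset.univ a = (2 * K + 2) * Al s m := by
        simp only [L₁, L₂, sc_append, sc_rep, sc_cons, sc_nil, hab c a hca.symm,
          pts_lin_top s (lin2_inj a c) (lin2_first a c),
          pts_allBut_self hs Finset.univ (Finset.mem_univ a), hdx _ a (Finset.mem_univ a) hca.symm]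
        push_cast; ring
      rw [hsa]
      have h1 := mul_nonneg (by positivity : (0:ℝ) ≤ K + 1)
        (pts_nonneg hs (lin2 a c) Finset.univ b)
      by_cases hbc : b = c
      · rw [hbc] at h1 ⊢
        have hz : pts s (dich {c}) Finset.univ c = s [1, m - 1] 0 := by
          rw [pts_top, type_dich {c} Finset.univ (a := c) (b := a) (by simp) (by simp) (by simp)
            (by simp [hca.symm])]
          · simp [Finset.card_univ_sdiff]
          · intro d _; simp [dich]
        simp only [L₁, L₂, sc_append, sc_rep, sc_cons, sc_nil, hz, hab a c hca,
          pts_allBut_self hs Finset.univ (Finset.mem_univ c)]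
        push_cast
        nlinarith
      · simp only [L₁, L₂, sc_append, sc_rep, sc_cons, sc_nil, hab c b hbc, hab a b hb,
          hdx _ b (Finset.mem_univ b) hbc]
        push_cast
        linarith
    · intro B _ haB hcB _ x hx hxc
      have hxa : x ≠ a := fun h => haB (h ▸ hx)
      have g1 := good_allBut hs c B
      have g2 : Good s (lin2 a c) B := good_linear hs (lin2_inj a c).injOn
      have e1 : app (lin2 a c) B c = 1 := by
        refine app_one ?_ hx (by simp [lin2, hca, hxc, hxa])
        intro d hd
        have hda : d ≠ a := fun h => haB (h ▸ hd)
        simp only [lin2, hca, hda, if_false, if_true]; split_ifs <;> omega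
      have e2 : app (lin2 a c) B x = 0 := app_zero hcB (by simp [lin2, hca, hxc, hxa])
      have e3 := mul_nonneg (by positivity : (0:ℝ) ≤ K) (pts_nonneg hs (dich {c}) B c)
      have e4 : app (allBut c) B x * Al s B.card ≤ 1 * Al s B.card :=
        mul_le_mul_of_nonneg_right (app_le_one _ _ _) (hs.nn _ _)
      have e5 : ((K:ℝ) + 1) * (app (allBut c) B x * Al s B.card) ≤ (K + 1) * (1 * Al s B.card) :=
        mul_le_mul_of_nonneg_left e4 (by positivity)
      simp only [L₁, L₂, sc_append, sc_rep, sc_cons, sc_nil, add_zero, g1 x hx, g2 x hx, g2 c hcB,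
        pts_allBut_self hs B hcB, pts_allBut_out hs B haB hx, pts_allBut_out hs B haB hcB,
        hdx B x hx hxc, e1, e2]
      push_cast
      linarith
  obtain ⟨ρ, hρ, htop⟩ := hs.majW L₁ L₂ Finset.univ
    (by simp only [L₁, L₂, List.length_append, length_rep, List.length_cons, List.length_nil]; omega)
    a (by simp) (by
      intro ρ hρ d _
      simp only [L₁, List.mem_append] at hρ
      rcases hρ with h | h <;> have h := mem_rep h <;> simp only [List.mem_singleton] at h <;>
        subst h
      · simp [allBut_apply, hca.symm]
      · exact lin2_first a c d) hw
  have := htop a (by simp)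
  simp only [L₁, List.mem_append] at hρ
  rcases hρ with h | h <;> have h := mem_rep h <;> simp only [List.mem_singleton] at h <;>
    subst h
  · simp [allBut_apply, hca.symm] at this
  · simp [lin2, hca] at this

/-! ### Dichotomous order types -/

lemma good_dich_of {s : List ℕ → ℕ → ℝ} (hs : Nice s) {m : ℕ} (T A : Finset (Fin m))
    (h : ∀ k k', 1 ≤ k → 1 ≤ k' → k + k' = A.card → s [k, k'] 0 = Al s A.card) :
    Good s (dich T) A := by
  apply good_of hs
  · intro a ha d hd hlt
    have haT : a ∈ T := by
      by_contra h0; simp only [dich, h0, if_false] at hlt; split_ifs at hlt <;> omega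
    have hdT : d ∉ T := by
      intro h0; simp [dich, h0] at hlt
    rw [type_dich T A ha haT hd hdT]
    apply h
    · exact Finset.card_pos.2 ⟨a, by simp [ha, haT]⟩
    · exact Finset.card_pos.2 ⟨d, by simp [hd, hdT]⟩
    · exact Finset.card_inter_add_card_sdiff A T
  · intro a ha d hd e he h1 h2
    simp only [dich] at h1 h2
    split_ifs at h1 h2 <;> omega

lemma dich_eq {s : List ℕ → ℕ → ℝ} (hs : Nice s) (n : ℕ) :
    ∀ k k', 1 ≤ k → 1 ≤ k' → k + k' = n → s [k, k'] 0 = Al s n := by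
  induction n using Nat.strong_induction_on with
  | _ n ih =>
    intro k k' hk hk' hn
    rcases Nat.lt_or_ge k' 2 with h | h
    · obtain rfl : k' = 1 := by omega
      have := allBut_eq hs (m := n) (by omega)
      rwa [← hn, Nat.add_sub_cancel, hn] at this
    · let z : Fin n := ⟨0, by omega⟩
      let d : Fin n := ⟨n - 1, by omega⟩
      let T : Finset (Fin n) := Finset.Iio ⟨k, by omega⟩
      have hmT : ∀ x, x ∈ T ↔ x.val < k := by intro x; simp [T, Fin.lt_def]
      have hzT : z ∈ T := by rw [hmT]; simp only [z]; omega
      have hdT : d ∉ T := by rw [hmT]; simp only [d]; omega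
      have hTcard : T.card = k := by simp [T]
      have hty : (ofRank (dich T)).orderType Finset.univ = [k, k'] := by
        rw [type_dich T Finset.univ (Finset.mem_univ z) hzT (Finset.mem_univ d) hdT,
          Finset.univ_inter, hTcard, Finset.card_univ_sdiff, hTcard, Fintype.card_fin]
        have : n - k = k' := by omega
        rw [this]
      have hg : ∀ B ≠ Finset.univ, Good s (dich T) B := by
        intro B hB
        have hlt : B.card < n := by
          have := Finset.card_lt_univ_of_notMem (s := B)
            (x := (not_forall.1 fun h => hB (Finset.eq_univ_iff_forall.2 h)).choose)
            (not_forall.1 fun h => hB (Finset.eq_univ_iff_forall.2 h)).choose_spec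
          simpa using this
        exact good_dich_of hs T B (ih _ hlt)
      have hz : ∀ x, dich T z ≤ dich T x := by intro x; simp [dich, hzT]
      have hzd : dich T z < dich T d := by simp [dich, hzT, hdT]
      apply le_antisymm
      · rcases Nat.lt_or_ge k 2 with h1 | h1
        · obtain rfl : k = 1 := by omega
          have := upper_bound_one hs (m := n) (by omega)
          have h2 : n - 1 = k' := by omega
          rwa [h2] at this
        · let z' : Fin n := ⟨1, by omega⟩
          have hz'T : z' ∈ T := by rw [hmT]; simp only [z']; omega
          rw [← hty]
          apply upper_bound hs (dich T) (a := z) (a' := z') (d := d) hz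
          · simp [dich, hzT, hz'T]
          · simp [z, z', Fin.ext_iff]
          · intro x; simp only [dich, hdT, if_false]; split_ifs <;> omega
          · exact hzd
          · exact hg
      · rw [← hty]
        exact lower_bound hs (dich T) hz hzd hg

lemma good_dich {s : List ℕ → ℕ → ℝ} (hs : Nice s) {m : ℕ} (T A : Finset (Fin m)) :
    Good s (dich T) A := good_dich_of hs T A (dich_eq hs _)

/-! ### The order type `(2, 1, 1)` -/

lemma good_211 {s : List ℕ → ℕ → ℝ} (hs : Nice s) (B : Finset (Fin 4)) (hB : B ≠ Finset.univ) :
    Good s ![0, 0, 1, 2] B := by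
  by_cases h0 : (0 : Fin 4) ∈ B
  · by_cases h1 : (1 : Fin 4) ∈ B
    · have h23 : (2 : Fin 4) ∉ B ∨ (3 : Fin 4) ∉ B := by
        by_contra h
        push Not at h
        apply hB
        ext x; fin_cases x <;> simp_all
      apply (good_dich hs {0, 1} B).congr
      intro x hx y hy
      rcases h23 with h | h
      · have hx' : x ≠ 2 := fun e => h (e ▸ hx)
        have hy' : y ≠ 2 := fun e => h (e ▸ hy)
        clear hx hy h
        fin_cases x <;> fin_cases y <;> simp_all [dich]
      · have hx' : x ≠ 3 := fun e => h (e ▸ hx)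
        have hy' : y ≠ 3 := fun e => h (e ▸ hy)
        clear hx hy h
        fin_cases x <;> fin_cases y <;> simp_all [dich]
    · apply good_linear hs
      intro x hx y hy h
      have hx' : x ≠ 1 := fun e => h1 (e ▸ hx)
      have hy' : y ≠ 1 := fun e => h1 (e ▸ hy)
      clear hx hy
      fin_cases x <;> fin_cases y <;> simp_all
  · exact good_linear hs (by apply injOn_tail _ _ _ h0 <;> norm_num)

lemma first_211 {s : List ℕ → ℕ → ℝ} (hs : Nice s) : s [2, 1, 1] 0 = Al s 4 := by
  rw [← type_v1]
  apply le_antisymm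
  · apply upper_bound hs (m := 4) ![0, 0, 1, 2] (a := 0) (a' := 1) (d := 3)
    · simp
    · simp
    · simp
    · simp [Fin.forall_fin_succ]
    · simp
    · exact good_211 hs
  · apply lower_bound hs (m := 4) ![0, 0, 1, 2] (a := 0) (c := 2)
    · simp
    · simp
    · exact good_211 hs

/-- The second score value of `(2, 1, 1)` vanishes: otherwise candidate `0`, supported by a bare
majority, can be eliminated with the help of votes ranking `2` second, and then `2` wins. -/
lemma second_211 {s : List ℕ → ℕ → ℝ} (hs : Nice s) : s [2, 1, 1] 1 = 0 := by
  by_contra hcon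
  set t := s [2, 1, 1] 1 with ht
  have htpos : 0 < t := lt_of_le_of_ne (hs.nn _ _) (Ne.symm hcon)
  obtain ⟨n, hn⟩ := exists_nat_gt (Al s 4 / t)
  rw [div_lt_iff₀ htpos] at hn
  have hnr : (0:ℝ) ≤ n := by positivity
  set v1 : Fin 4 → ℕ := ![0, 0, 1, 2] with hv1
  set v2 : Fin 4 → ℕ := ![0, 2, 1, 0] with hv2
  set v3 : Fin 4 → ℕ := ![0, 2, 1, 3] with hv3
  set v4 : Fin 4 → ℕ := allBut 0 with hv4
  set v5 : Fin 4 → ℕ := ![1, 2, 0, 3] with hv5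
  let L₁ := rep (n + 1) [v1] ++ rep (n + 1) [v2] ++ [v3]
  let L₂ := rep (n + 2) [v4] ++ rep n [v5]
  have hi3 : Function.Injective v3 := by apply inj_four <;> norm_num
  have hi5 : Function.Injective v5 := by apply inj_four <;> norm_num
  have hw : (2 : Fin 4) ∈ Win s (L₁ ++ L₂) Finset.univ := by
    apply win_elim_dom s _ 0 2 _ (by simp) (by simp) (by simp)
    · have t1 : ∀ x, (∀ d, v1 x ≤ v1 d) → pts s v1 Finset.univ x = Al s 4 := fun x hx => by
        rw [pts_top s _ _ fun d _ => hx d, type_v1, first_211 hs]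
      have t2 : ∀ x, (∀ d, v2 x ≤ v2 d) → pts s v2 Finset.univ x = Al s 4 := fun x hx => by
        rw [pts_top s _ _ fun d _ => hx d, type_v2, first_211 hs]
      have t4 : ∀ x, x ≠ 0 → pts s v4 Finset.univ x = Al s 4 := fun x hx => by
        rw [hv4, pts_allBut s Finset.univ (Finset.mem_univ _) (Finset.mem_univ x) hx]
        simpa using allBut_eq hs (m := 4) (by omega)
      have c1 : pts s v1 Finset.univ 2 = t := by
        rw [pts_second s _ _ (Finset.mem_univ (0 : Fin 4)) (by simp [hv1])
          (by simp [hv1]), type_v1]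
      have c2 : pts s v2 Finset.univ 2 = t := by
        rw [pts_second s _ _ (Finset.mem_univ (0 : Fin 4)) (by simp [hv2])
          (by simp [hv2]), type_v2]
      have a1 := t1 0 (by simp [hv1])
      have a2 := t2 0 (by simp [hv2])
      have a3 : pts s v3 Finset.univ 0 = Al s 4 := pts_four_top hi3 (by simp [hv3])
      have a4 : pts s v4 Finset.univ 0 = 0 := pts_allBut_self hs Finset.univ (by simp)
      have a5 : pts s v5 Finset.univ 0 = 0 := by
        rw [good_linear hs hi5.injOn 0 (by simp), app_zero (d := 2) (by simp) (by simp [hv5]),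
          zero_mul]
      have n1 := pts_nonneg hs v1 Finset.univ
      have n2 := pts_nonneg hs v2 Finset.univ
      have n3 := pts_nonneg hs v3 Finset.univ
      have n5 := pts_nonneg hs v5 Finset.univ
      intro x _ hx
      simp only [L₁, L₂, sc_append, sc_rep, sc_cons, sc_nil, add_zero, a1, a2, a3, a4, a5, t4 x hx]
      push_cast
      fin_cases x
      · simp at hx
      · change _ ≤ ((n:ℝ) + 1) * pts s v1 Finset.univ 1 + (n + 1) * pts s v2 Finset.univ 1 +
          pts s v3 Finset.univ 1 + ((n + 2) * Al s 4 + n * pts s v5 Finset.univ 1)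
        rw [t1 1 (by simp [hv1])]
        nlinarith [mul_nonneg hnr (n2 1), n2 1, n3 1, mul_nonneg hnr (n5 1)]
      · change _ ≤ ((n:ℝ) + 1) * pts s v1 Finset.univ 2 + (n + 1) * pts s v2 Finset.univ 2 +
          pts s v3 Finset.univ 2 + ((n + 2) * Al s 4 + n * pts s v5 Finset.univ 2)
        rw [c1, c2, pts_four_top hi5 (by simp [hv5])]
        nlinarith [n3 2, mul_nonneg hnr htpos.le]
      · change _ ≤ ((n:ℝ) + 1) * pts s v1 Finset.univ 3 + (n + 1) * pts s v2 Finset.univ 3 +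
          pts s v3 Finset.univ 3 + ((n + 2) * Al s 4 + n * pts s v5 Finset.univ 3)
        rw [t2 3 (by simp [hv2])]
        nlinarith [mul_nonneg hnr (n1 3), n1 3, n3 3, mul_nonneg hnr (n5 3)]
    · intro B _ h0 h2 hB x hx hx2
      have g : ∀ ρ ∈ L₁ ++ L₂, Good s ρ B := by
        intro ρ hρ
        simp only [L₁, L₂, List.mem_append, List.mem_singleton] at hρ
        rcases hρ with ((h | h) | h) | (h | h)
        · have h := mem_rep h
          simp only [List.mem_singleton] at h; subst h
          exact good_linear hs (by apply injOn_tail _ _ _ h0 <;> norm_num)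
        · have h := mem_rep h
          simp only [List.mem_singleton] at h; subst h
          exact good_linear hs (by apply injOn_tail _ _ _ h0 <;> norm_num)
        · subst h
          exact good_linear hs hi3.injOn
        · have h := mem_rep h
          simp only [List.mem_singleton] at h; subst h
          exact good_allBut hs 0 B
        · have h := mem_rep h
          simp only [List.mem_singleton] at h; subst h
          exact good_linear hs hi5.injOn
      rw [sc_eq_ap g hx, sc_eq_ap g h2]
      apply mul_le_mul_of_nonneg_right _ (hs.nn _ _)
      simp only [L₁, L₂, ap_append, ap_rep, ap_cons, ap_nil]
      push_cast
      rcases subsets_four B h0 h2 hB with rfl | rfl | rfl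
      · have : x = 1 := by simp at hx; tauto
        subst this
        simp [app, hv1, hv2, hv3, hv4, hv5, allBut_apply]
        linarith
      · have : x = 3 := by simp at hx; tauto
        subst this
        simp [app, hv1, hv2, hv3, hv4, hv5, allBut_apply]
        linarith
      · have : x = 1 ∨ x = 3 := by simp at hx; tauto
        rcases this with rfl | rfl
        · simp [app, hv1, hv2, hv3, hv4, hv5, allBut_apply]
          linarith
        · simp [app, hv1, hv2, hv3, hv4, hv5, allBut_apply]
          linarith
  obtain ⟨ρ, hρ, htop⟩ := hs.majW L₁ L₂ Finset.univ (by simp [L₁, L₂]; omega) 0 (by simp) (by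
    intro ρ hρ d _
    simp only [L₁, List.mem_append, List.mem_singleton] at hρ
    rcases hρ with (h | h) | h
    · have h := mem_rep h
      simp only [List.mem_singleton] at h; subst h; simp [hv1]
    · have h := mem_rep h
      simp only [List.mem_singleton] at h; subst h; simp [hv2]
    · subst h; simp [hv3]) hw
  have := htop 0 (by simp)
  simp only [L₁, List.mem_append, List.mem_singleton] at hρ
  rcases hρ with (h | h) | h
  · have h := mem_rep h
    simp only [List.mem_singleton] at h; subst h; simp [hv1] at this
  · have h := mem_rep h
    simp only [List.mem_singleton] at h; subst h; simp [hv2] at this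
  · subst h; simp [hv3] at this

/-- If the elimination scoring rule of a monotone scoring
system `s` satisfies independence of clones and respects cohesive majorities,
then, writing `α_m = s((1,…,1))₁` for the first score value of the linear order
type on `m` candidates: (1) `s((2,1)) = (α₃, 0)`; (2) `s((3,1)) = (α₄, 0)`;
(3) `s((2,1,1)) = (α₄, 0, 0)`; and (4) every dichotomous order type `(k, k′)`
with `k + k′ = m` has scoring vector `(α_m, 0)`. -/
theorem dichotomous_types_get_approval_scores
    (s : List ℕ → ℕ → ℝ)
    (hnn : NonnegSys s) (hlz : LastZeroSys s) (hmono : MonotoneSys s)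
    (hclones : ∀ (m n : ℕ) (P : Fin n → WeakOrder (Fin m))
        (A X : Finset (Fin m)), IsCloneSet P A X → ∀ xhat ∈ X,
      (∀ c ∈ A, c ∉ X →
        (c ∈ winners s P A ↔ c ∈ winners s P (A \ X.erase xhat))) ∧
      (xhat ∈ winners s P (A \ X.erase xhat) ↔
        (X ∩ winners s P A).Nonempty))
    (hmaj : ∀ (m n : ℕ) (P : Fin n → WeakOrder (Fin m))
        (A : Finset (Fin m)) (S : Finset (Fin n)),
      n < 2 * S.card →
      (∃ c ∈ A, ∀ i ∈ S, c ∈ (P i).topSet A) →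
      winners s P A ⊆ S.biUnion fun i => (P i).topSet A) :
    (s [2, 1] 0 = s (List.replicate 3 1) 0 ∧ s [2, 1] 1 = 0) ∧
    (s [3, 1] 0 = s (List.replicate 4 1) 0 ∧ s [3, 1] 1 = 0) ∧
    (s [2, 1, 1] 0 = s (List.replicate 4 1) 0 ∧
      s [2, 1, 1] 1 = 0 ∧ s [2, 1, 1] 2 = 0) ∧
    (∀ k k' : ℕ, 1 ≤ k → 1 ≤ k' →
      s [k, k'] 0 = s (List.replicate (k + k') 1) 0 ∧ s [k, k'] 1 = 0) := by
  have hs : Nice s := ⟨hnn, hlz, hmono, hclones, hmaj⟩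
  have hd : ∀ k k' : ℕ, 1 ≤ k → 1 ≤ k' →
      s [k, k'] 0 = s (List.replicate (k + k') 1) 0 ∧ s [k, k'] 1 = 0 := fun k k' hk hk' =>
    ⟨dich_eq hs (k + k') k k' hk hk' rfl, hlz [k, k'] (by simp)⟩
  exact ⟨hd 2 1 (by omega) (by omega), hd 3 1 (by omega) (by omega),
    ⟨first_211 hs, second_211 hs, hlz [2, 1, 1] (by simp)⟩, hd⟩
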